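/- An element (λ, s) with λ = (λ₁ ≥ … ≥ λ₆) ∈ ℝ⁶ and s = (s₁ ≥ s₂ ≥ s₃ ≥ 0) ∈ ℝ³ belongs to A(3,3) if and only if the following thirteen inequalities hold: λ₁ − λ₆ ≥ 2s₁; λ₂ − λ₆ ≥ 2s₂; λ₁ − λ₅ ≥ 2s₂; λ₁ − λ₄ ≥ 2s₃; λ₂ − λ₅ ≥ 2s₃; λ₃ − λ₆ ≥ 2s₃; λ₁ + λ₂ − λ₅ − λ₆ ≥ 2(s₁+s₂); λ₁ + λ₂ − λ₄ − λ₆ ≥ 2(s₁+s₃); λ₁ + λ₃ − λ₅ − λ₆ ≥ 2(s₁+s₃); λ₁ + λ₂ − λ₄ − λ₅ ≥ 2(s₂+s₃); λ₁ + λ₃ − λ₄ − λ₆ ≥ 2(s₂+s₃); λ₂ + λ₃ − λ₅ − λ₆ ≥ 2(s₂+s₃); λ₁ + λ₂ + λ₃ − λ₄ − λ₅ − λ₆ ≥ 2(s₁+s₂+s₃). -/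

import Mathlib

open Matrix

/-- Eigenvalues of a (Hermitian) complex matrix, listed in decreasing order. -/
noncomputable def eigVec {k : ℕ} (X : Matrix (Fin k) (Fin k) ℂ) (hX : X.IsHermitian) :
    Fin k → ℝ :=
  fun i => hX.eigenvalues (Tuple.sort hX.eigenvalues i.rev)

/-- The `i`-th (0-based) singular value of a rectangular complex matrix:
the square root of the `i`-th largest eigenvalue of `Y * Yᴴ` (and `0` for `i ≥ a`). -/
noncomputable def sval {a b : ℕ} (Y : Matrix (Fin a) (Fin b) ℂ) (i : ℕ) : ℝ :=
  if h : i < a then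
    Real.sqrt (eigVec (Y * Yᴴ) (Matrix.isHermitian_mul_conjTranspose_self Y) ⟨i, h⟩)
  else 0

/-- The Horn cone `Horn(k)`. -/
def Horn (k : ℕ) : Set ((Fin k → ℝ) × (Fin k → ℝ) × (Fin k → ℝ)) :=
  { v | ∃ (X Y : Matrix (Fin k) (Fin k) ℂ) (hX : X.IsHermitian) (hY : Y.IsHermitian),
      v.1 = eigVec X hX ∧ v.2.1 = eigVec Y hY ∧ v.2.2 = eigVec (X + Y) (hX.add hY) }

/-- The Littlewood–Richardson cone `LR(m,n)`. -/
def LRcone (m n : ℕ) : Set ((Fin (m + n) → ℝ) × (Fin m → ℝ) × (Fin n → ℝ)) :=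
  { v | ∃ (M : Matrix (Fin (m + n)) (Fin (m + n)) ℂ) (hM : M.IsHermitian),
      v.1 = eigVec M hM ∧
      v.2.1 = eigVec (M.submatrix (Fin.castAdd n) (Fin.castAdd n))
        (hM.submatrix (Fin.castAdd n)) ∧
      v.2.2 = eigVec (M.submatrix (Fin.natAdd m) (Fin.natAdd m))
        (hM.submatrix (Fin.natAdd m)) }

/-- Top-left `p × p` block. -/
def blockTL (p q : ℕ) (X : Matrix (Fin (p + q)) (Fin (p + q)) ℂ) : Matrix (Fin p) (Fin p) ℂ :=
  X.submatrix (Fin.castAdd q) (Fin.castAdd q)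

/-- Top-right `p × q` block. -/
def blockTR (p q : ℕ) (X : Matrix (Fin (p + q)) (Fin (p + q)) ℂ) : Matrix (Fin p) (Fin q) ℂ :=
  X.submatrix (Fin.castAdd q) (Fin.natAdd p)

/-- Bottom-left `q × p` block. -/
def blockBL (p q : ℕ) (X : Matrix (Fin (p + q)) (Fin (p + q)) ℂ) : Matrix (Fin q) (Fin p) ℂ :=
  X.submatrix (Fin.natAdd p) (Fin.castAdd q)

/-- Bottom-right `q × q` block. -/
def blockBR (p q : ℕ) (X : Matrix (Fin (p + q)) (Fin (p + q)) ℂ) : Matrix (Fin q) (Fin q) ℂ :=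
  X.submatrix (Fin.natAdd p) (Fin.natAdd p)

/-- `λ* = (−λ_k, …, −λ_1)`. -/
def starVec {k : ℕ} (x : Fin k → ℝ) : Fin k → ℝ := fun i => -x i.rev

/-- `ŝ^{p,q} = (s₁, …, s_q, 0, …, 0, −s_q, …, −s₁) ∈ ℝ^{p+q}` (with `p − q` middle zeros). -/
noncomputable def hatPQ (p q : ℕ) (s : Fin q → ℝ) : Fin (p + q) → ℝ :=
  fun i =>
    if h : (i : ℕ) < q then s ⟨i, h⟩
    else if h' : (i : ℕ) < p then 0
    else -s ⟨p + q - 1 - i, by have := i.isLt; omega⟩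

/-- The cone `A(p,q)`: pairs `(e(X), s(X₁₂))` for `X` Hermitian of size `p+q`. -/
def coneA (p q : ℕ) : Set ((Fin (p + q) → ℝ) × (Fin q → ℝ)) :=
  { v | ∃ (X : Matrix (Fin (p + q)) (Fin (p + q)) ℂ) (hX : X.IsHermitian),
      v.1 = eigVec X hX ∧ ∀ i : Fin q, v.2 i = sval (blockTR p q X) (i : ℕ) }

/-- The cone `S(p,q)`: triples `(s(X), s(X₁₂), s(X₂₁))`. -/
def coneS (p q : ℕ) : Set ((Fin (p + q) → ℝ) × (Fin q → ℝ) × (Fin q → ℝ)) :=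
  { v | ∃ X : Matrix (Fin (p + q)) (Fin (p + q)) ℂ,
      (∀ i : Fin (p + q), v.1 i = sval X (i : ℕ)) ∧
      (∀ i : Fin q, v.2.1 i = sval (blockTR p q X) (i : ℕ)) ∧
      (∀ i : Fin q, v.2.2 i = sval (blockBL p q X) (i : ℕ)) }

/-- The cone `T(p,q)`: triples `(s(X), s(X₁₁), s(X₂₂))`. -/
def coneT (p q : ℕ) : Set ((Fin (p + q) → ℝ) × (Fin p → ℝ) × (Fin q → ℝ)) :=
  { v | ∃ X : Matrix (Fin (p + q)) (Fin (p + q)) ℂ,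
      (∀ i : Fin (p + q), v.1 i = sval X (i : ℕ)) ∧
      (∀ i : Fin p, v.2.1 i = sval (blockTL p q X) (i : ℕ)) ∧
      (∀ i : Fin q, v.2.2 i = sval (blockBR p q X) (i : ℕ)) }

/-- `μ(A) = (a_r − r ≥ … ≥ a₂ − 2 ≥ a₁ − 1)` as a decreasing real vector, for
`A = {a₁ < … < a_r}` a subset of `[n]` (0-based indexing internally). -/
noncomputable def muVec {n r : ℕ} (A : Finset (Fin n)) (h : A.card = r) : Fin r → ℝ :=
  fun k => (((A.orderIsoOfFin h k.rev : Fin n) : ℕ) : ℝ) - ((k.rev : ℕ) : ℝ)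

/-- `A^o = {ℓ + 1 − a : a ∈ A}` inside `[ℓ]`. -/
def opp {n : ℕ} (A : Finset (Fin n)) : Finset (Fin n) := A.image Fin.rev

/-- `|s|_{K ∩ [q]}` where `K ⊆ [n]`, `s ∈ ℝ^q` and `[q]` is viewed inside `[n]`. -/
noncomputable def sumRestr {n q : ℕ} (s : Fin q → ℝ) (K : Finset (Fin n)) : ℝ :=
  ∑ i ∈ K, (if h : (i : ℕ) < q then s ⟨i, h⟩ else 0)

/-- The augmented matrix `Ŷ^{p,q} = [[0, Y], [Yᴴ, 0]]` of size `p + q`. -/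
def hatM (p q : ℕ) (Y : Matrix (Fin p) (Fin q) ℂ) : Matrix (Fin (p + q)) (Fin (p + q)) ℂ :=
  Matrix.reindex finSumFinEquiv finSumFinEquiv (Matrix.fromBlocks 0 Y Yᴴ 0)

lemma eigVec_antitone {k : ℕ} (X : Matrix (Fin k) (Fin k) ℂ) (hX : X.IsHermitian) :
    Antitone (eigVec X hX) := fun _ _ hij =>
  Tuple.monotone_sort hX.eigenvalues (Fin.rev_le_rev.mpr hij)

/-- The permutation sorting the eigenvalues in decreasing order. -/
noncomputable def eigPerm {k : ℕ} (X : Matrix (Fin k) (Fin k) ℂ) (hX : X.IsHermitian) :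
    Equiv.Perm (Fin k) := Fin.revPerm.trans (Tuple.sort hX.eigenvalues)

lemma charpoly_eq_prod_eigVec {k : ℕ} (X : Matrix (Fin k) (Fin k) ℂ) (hX : X.IsHermitian) :
    X.charpoly = ∏ i, (Polynomial.X - Polynomial.C (eigVec X hX i : ℂ)) := by
  rw [hX.charpoly_eq, ← Equiv.prod_comp (eigPerm X hX)]
  rfl

lemma Antitone.eq_of_map_univ_eq {k : ℕ} {f g : Fin k → ℝ} (hf : Antitone f) (hg : Antitone g)
    (h : Multiset.map f Finset.univ.val = Multiset.map g Finset.univ.val) : f = g := by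
  rw [Fin.univ_val_map, Fin.univ_val_map, Multiset.coe_eq_coe] at h
  exact List.ofFn_injective (h.eq_of_sortedGE hf.sortedGE_ofFn hg.sortedGE_ofFn)

lemma Polynomial.map_univ_eq_of_prod_X_sub_C_eq {ι : Type*} [Fintype ι] {f g : ι → ℝ}
    (h : ∏ i, (X - C (f i : ℂ)) = ∏ i, (X - C (g i : ℂ))) :
    Multiset.map f Finset.univ.val = Multiset.map g Finset.univ.val := by
  have key : ∀ f : ι → ℝ, (∏ i, (X - C (f i : ℂ))).roots =
      Multiset.map Complex.ofReal (Multiset.map f Finset.univ.val) := fun f => by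
    rw [← roots_multiset_prod_X_sub_C (Multiset.map Complex.ofReal _), Multiset.map_map,
      Multiset.map_map]
    rfl
  apply Multiset.map_injective Complex.ofReal_injective
  rw [← key, ← key, h]

lemma eigVec_eq_of_charpoly {k : ℕ} {X : Matrix (Fin k) (Fin k) ℂ} (hX : X.IsHermitian)
    {l : Fin k → ℝ} (hl : Antitone l)
    (h : X.charpoly = ∏ i, (Polynomial.X - Polynomial.C (l i : ℂ))) : eigVec X hX = l := by
  rw [charpoly_eq_prod_eigVec X hX] at h
  exact (eigVec_antitone X hX).eq_of_map_univ_eq hl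
    (Polynomial.map_univ_eq_of_prod_X_sub_C_eq h)

lemma exists_unitary_eigVec {k : ℕ} (X : Matrix (Fin k) (Fin k) ℂ) (hX : X.IsHermitian) :
    ∃ U : Matrix (Fin k) (Fin k) ℂ, Uᴴ * U = 1 ∧ U * Uᴴ = 1 ∧
      X = U * diagonal (fun i => (eigVec X hX i : ℂ)) * Uᴴ := by
  set V : Matrix (Fin k) (Fin k) ℂ := hX.eigenvectorUnitary.1
  have h1 : Vᴴ * V = 1 := Unitary.coe_star_mul_self hX.eigenvectorUnitary
  have h2 : V * Vᴴ = 1 := Unitary.coe_mul_star_self hX.eigenvectorUnitary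
  have h3 : X = V * diagonal (RCLike.ofReal ∘ hX.eigenvalues) * Vᴴ := by
    conv_lhs => rw [hX.spectral_theorem, Unitary.conjStarAlgAut_apply]
    rfl
  have hd : diagonal (fun i => (eigVec X hX i : ℂ)) =
      (diagonal (RCLike.ofReal ∘ hX.eigenvalues)).submatrix (eigPerm X hX) (eigPerm X hX) := by
    rw [submatrix_diagonal_equiv]
    rfl
  refine ⟨V.submatrix id (eigPerm X hX), ?_, ?_, ?_⟩
  · rw [conjTranspose_submatrix, submatrix_mul _ _ _ id _ Function.bijective_id |>.symm, h1,
      submatrix_one_equiv]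
  · rw [conjTranspose_submatrix, submatrix_mul_equiv, h2, submatrix_id_id]
  · rw [conjTranspose_submatrix, hd, submatrix_mul_equiv, submatrix_mul_equiv, ← h3,
      submatrix_id_id]

open scoped ComplexOrder in
lemma eigVec_self_mul_conjTranspose_nonneg {k : ℕ} (B : Matrix (Fin k) (Fin k) ℂ) (i : Fin k) :
    0 ≤ eigVec (B * Bᴴ) (isHermitian_mul_conjTranspose_self B) i :=
  (posSemidef_self_mul_conjTranspose B).eigenvalues_nonneg _

lemma sval_sq {k : ℕ} (B : Matrix (Fin k) (Fin k) ℂ) (i : Fin k) :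
    sval B i ^ 2 = eigVec (B * Bᴴ) (isHermitian_mul_conjTranspose_self B) i := by
  rw [sval, dif_pos i.isLt, Real.sq_sqrt (eigVec_self_mul_conjTranspose_nonneg B i)]

lemma sval_diagonal {k : ℕ} {s : Fin k → ℝ} (hs : Antitone s) (hs0 : ∀ i, 0 ≤ s i) (i : Fin k) :
    sval (diagonal fun i => (s i : ℂ)) i = s i := by
  have h : eigVec _ (isHermitian_mul_conjTranspose_self (diagonal fun i => (s i : ℂ))) =
      fun i => s i ^ 2 := by
    apply eigVec_eq_of_charpoly
    · intro i j hij
      exact pow_le_pow_left₀ (hs0 j) (hs hij) 2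
    · rw [diagonal_conjTranspose, diagonal_mul_diagonal, charpoly_diagonal]
      simp [sq]
  rw [sval, dif_pos i.isLt, h]
  exact Real.sqrt_sq (hs0 i)

lemma exists_unitary_of_mul_conjTranspose_eq {k : ℕ} {M : Matrix (Fin k) (Fin k) ℂ} {σ : Fin k → ℝ}
    (h : M * Mᴴ = diagonal fun i => ((σ i ^ 2 : ℝ) : ℂ)) :
    ∃ W : Matrix (Fin k) (Fin k) ℂ, W * Wᴴ = 1 ∧ M = diagonal (fun i => (σ i : ℂ)) * W := by
  let r : Fin k → EuclideanSpace ℂ (Fin k) := fun i => WithLp.toLp 2 (M i)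
  have hr : ∀ i j, inner ℂ (r i) (r j) = if i = j then ((σ i ^ 2 : ℝ) : ℂ) else 0 := by
    intro i j
    have := congrFun (congrFun h j) i
    simp only [mul_apply, conjTranspose_apply, diagonal_apply] at this
    simp only [r, PiLp.inner_apply, RCLike.inner_apply]
    rw [show (∑ x, M j x * (starRingEnd ℂ) (M i x)) = ∑ x, M j x * star (M i x) from rfl, this]
    by_cases hij : i = j
    · simp [hij]
    · simp [hij, Ne.symm hij]
  have ho : Orthonormal ℂ ({i | σ i ≠ 0}.domRestrict fun i => ((σ i : ℂ)⁻¹) • r i) := by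
    rw [orthonormal_iff_ite]
    rintro ⟨i, hi⟩ ⟨j, hj⟩
    simp only [Set.domRestrict_apply, inner_smul_left, inner_smul_right, hr, Subtype.mk.injEq]
    by_cases hij : i = j
    · subst hij
      have : (σ i : ℂ) ≠ 0 := by exact_mod_cast hi
      simp
      field_simp
    · simp [hij]
  obtain ⟨b, hb⟩ := ho.exists_orthonormalBasis_extension_of_card_eq (by simp)
  refine ⟨of fun i j => b i j, ?_, ?_⟩
  · ext i j
    have := (orthonormal_iff_ite.mp b.orthonormal) j i
    simp only [PiLp.inner_apply, RCLike.inner_apply] at this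
    simp only [mul_apply, conjTranspose_apply, of_apply, one_apply]
    rw [show (∑ x, b i x * star (b j x)) = ∑ x, b i x * (starRingEnd ℂ) (b j x) from rfl, this]
    simp [eq_comm]
  · ext i j
    rw [diagonal_mul, of_apply]
    by_cases hi : σ i = 0
    · have := hr i i
      rw [if_pos rfl, hi] at this
      have h0 : r i = 0 := by simpa using this
      have : M i j = r i j := rfl
      simp [this, h0, hi]
    · have h1 : (σ i : ℂ) ≠ 0 := by exact_mod_cast hi
      rw [hb i hi]
      simp [r, h1]

/-- Singular value decomposition of a square matrix. -/
lemma exists_svd {k : ℕ} (B : Matrix (Fin k) (Fin k) ℂ) :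
    ∃ U V : Matrix (Fin k) (Fin k) ℂ, Uᴴ * U = 1 ∧ Vᴴ * V = 1 ∧
      Uᴴ * B * V = diagonal fun i : Fin k => (sval B i : ℂ) := by
  obtain ⟨U, hU, hU', h⟩ := exists_unitary_eigVec _ (isHermitian_mul_conjTranspose_self B)
  have hM : (Uᴴ * B) * (Uᴴ * B)ᴴ = diagonal fun i : Fin k => ((sval B i ^ 2 : ℝ) : ℂ) := by
    simp only [sval_sq]
    rw [conjTranspose_mul, conjTranspose_conjTranspose]
    calc Uᴴ * B * (Bᴴ * U) = Uᴴ * (B * Bᴴ) * U := by simp only [Matrix.mul_assoc]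
      _ = (Uᴴ * U) * diagonal (fun i => (eigVec (B * Bᴴ)
          (isHermitian_mul_conjTranspose_self B) i : ℂ)) * (Uᴴ * U) := by
        conv_lhs => rw [h]
        simp only [Matrix.mul_assoc]
      _ = _ := by rw [hU, Matrix.one_mul, Matrix.mul_one]
  obtain ⟨W, hW, hW'⟩ := exists_unitary_of_mul_conjTranspose_eq hM
  refine ⟨U, Wᴴ, hU, by rwa [conjTranspose_conjTranspose], ?_⟩
  rw [hW', Matrix.mul_assoc, hW, Matrix.mul_one]

lemma eq_submatrix_fromBlocks (p q : ℕ) (X : Matrix (Fin (p + q)) (Fin (p + q)) ℂ) :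
    X = (fromBlocks (blockTL p q X) (blockTR p q X) (blockBL p q X)
      (blockBR p q X)).submatrix finSumFinEquiv.symm finSumFinEquiv.symm := by
  ext i j
  induction i using Fin.addCases <;> induction j using Fin.addCases <;>
    simp [blockTL, blockTR, blockBL, blockBR]

lemma exists_compressions {n : ℕ} (X : Matrix (Fin (n + n)) (Fin (n + n)) ℂ)
    (hX : X.IsHermitian) :
    ∃ G H : Matrix (Fin (n + n)) (Fin n) ℂ, Gᴴ * G = 1 ∧ Hᴴ * H = 1 ∧
      Gᴴ * diagonal (fun i => (eigVec X hX i : ℂ)) * G -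
        Hᴴ * diagonal (fun i => (eigVec X hX i : ℂ)) * H =
      diagonal fun i : Fin n => ((2 * sval (blockTR n n X) i : ℝ) : ℂ) := by
  obtain ⟨U, V, hU, hV, hUV⟩ := exists_svd (blockTR n n X)
  obtain ⟨E, -, hE, hXE⟩ := exists_unitary_eigVec X hX
  let c : ℂ := ((Real.sqrt 2)⁻¹ : ℝ)
  have hc : c * c = 2⁻¹ := by
    simp only [c]
    rw [← Complex.ofReal_mul, ← mul_inv, Real.mul_self_sqrt (by norm_num)]
    simp
  have hcs : star c = c := Complex.conj_ofReal _
  let F : Matrix (Fin n) (Fin n) ℂ → Matrix (Fin (n + n)) (Fin n) ℂ := fun W =>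
    (c • fromRows U W).submatrix finSumFinEquiv.symm id
  have hXb : X = (fromBlocks (blockTL n n X) (blockTR n n X) (blockTR n n X)ᴴ
      (blockBR n n X)).submatrix finSumFinEquiv.symm finSumFinEquiv.symm := by
    have : (blockTR n n X)ᴴ = blockBL n n X := by
      ext i j
      exact hX.apply _ _
    rw [this]
    exact eq_submatrix_fromBlocks n n X
  have hF : ∀ W, Wᴴ * W = 1 → (F W)ᴴ * F W = 1 := by
    intro W hW
    simp only [F]
    rw [conjTranspose_submatrix, submatrix_mul_equiv, submatrix_id_id, conjTranspose_smul, hcs,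
      Matrix.smul_mul, Matrix.mul_smul, smul_smul, hc,
      conjTranspose_fromRows_eq_fromCols_conjTranspose,
      fromCols_mul_fromRows, hU, hW, ← two_smul ℂ, smul_smul]
    norm_num
  have hFX : ∀ W, (F W)ᴴ * X * F W = (2⁻¹ : ℂ) • (Uᴴ * blockTL n n X * U +
      Wᴴ * blockBR n n X * W + (Uᴴ * blockTR n n X * W + (Uᴴ * blockTR n n X * W)ᴴ)) := by
    intro W
    conv_lhs => rw [hXb]
    simp only [F]
    rw [conjTranspose_submatrix, submatrix_mul_equiv, submatrix_mul_equiv, submatrix_id_id,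
      conjTranspose_smul, hcs, Matrix.smul_mul, Matrix.smul_mul, Matrix.mul_smul, smul_smul, hc,
      conjTranspose_fromRows_eq_fromCols_conjTranspose, fromCols_mul_fromBlocks,
      fromCols_mul_fromRows]
    congr 1
    simp only [conjTranspose_mul, conjTranspose_conjTranspose, Matrix.add_mul, Matrix.mul_assoc]
    abel
  have hEF : ∀ W, (Eᴴ * F W)ᴴ * diagonal (fun i => (eigVec X hX i : ℂ)) * (Eᴴ * F W) =
      (F W)ᴴ * X * F W := by
    intro W
    conv_rhs => rw [hXE]
    simp only [conjTranspose_mul, conjTranspose_conjTranspose, Matrix.mul_assoc]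
  have hEF' : ∀ W, (Eᴴ * F W)ᴴ * (Eᴴ * F W) = (F W)ᴴ * F W := by
    intro W
    rw [conjTranspose_mul, conjTranspose_conjTranspose, Matrix.mul_assoc, ← Matrix.mul_assoc E,
      hE, Matrix.one_mul]
  refine ⟨Eᴴ * F V, Eᴴ * F (-V), ?_, ?_, ?_⟩
  · rw [hEF', hF V hV]
  · rw [hEF', hF (-V) (by simpa using hV)]
  · rw [hEF, hEF, hFX, hFX, ← smul_sub]
    simp only [Matrix.mul_neg, hUV, conjTranspose_neg, Matrix.neg_mul, neg_neg]
    rw [diagonal_conjTranspose]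
    ext i j
    by_cases hij : i = j
    · subst hij
      simp
      ring
    · simp [hij]

/-- The quadratic form of a real diagonal matrix compressed by `G`, through the rows of `G`. -/
lemma ofReal_sum_mul_norm_inner_sq {m n : ℕ} (G : Matrix (Fin m) (Fin n) ℂ) (d : Fin m → ℝ)
    (w : EuclideanSpace ℂ (Fin n)) :
    ((∑ j, d j * ‖inner ℂ (WithLp.toLp 2 (star (G j))) w‖ ^ 2 : ℝ) : ℂ) =
      star (w.ofLp) ⬝ᵥ (Gᴴ * diagonal (fun i => (d i : ℂ)) * G) *ᵥ w.ofLp := by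
  have h : ∀ j, inner ℂ (WithLp.toLp 2 (star (G j))) w = (G *ᵥ w.ofLp) j := by
    intro j
    simp [PiLp.inner_apply, mulVec, dotProduct, mul_comm]
  simp only [h]
  rw [← mulVec_mulVec, ← mulVec_mulVec, dotProduct_mulVec, ← star_mulVec]
  simp only [dotProduct, mulVec_diagonal, Pi.star_apply]
  push_cast
  refine Finset.sum_congr rfl fun j _ => ?_
  rw [← Complex.mul_conj']
  simp only [RCLike.star_def]
  ring

section WeightedSums

variable {n : ℕ} {l a : Fin n → ℝ}

lemma Antitone.sum_mul_le (hl : Antitone l) (ha : ∀ j, 0 ≤ a j) (h1 : ∑ j, a j = 1) (i : Fin n)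
    (h0 : ∀ j < i, a j = 0) : ∑ j, l j * a j ≤ l i := by
  calc ∑ j, l j * a j ≤ ∑ j, l i * a j := by
        refine Finset.sum_le_sum fun j _ => ?_
        rcases lt_or_ge j i with hj | hj
        · simp [h0 j hj]
        · exact mul_le_mul_of_nonneg_right (hl hj) (ha j)
    _ = l i := by rw [← Finset.mul_sum, h1, mul_one]

lemma Antitone.le_sum_mul (hl : Antitone l) (ha : ∀ j, 0 ≤ a j) (h1 : ∑ j, a j = 1) (i : Fin n)
    (h0 : ∀ j, i < j → a j = 0) : l i ≤ ∑ j, l j * a j := by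
  calc l i = ∑ j, l i * a j := by rw [← Finset.mul_sum, h1, mul_one]
    _ ≤ ∑ j, l j * a j := by
        refine Finset.sum_le_sum fun j _ => ?_
        rcases lt_or_ge i j with hj | hj
        · simp [h0 j hj]
        · exact mul_le_mul_of_nonneg_right (hl hj) (ha j)

/-- If the weights lie in `[0, 1]`, a weighted sum is at most the sum of the largest entries. -/
lemma Antitone.sum_mul_le_sum_Iic (hl : Antitone l) (ha : ∀ j, 0 ≤ a j) (ha1 : ∀ j, a j ≤ 1)
    (i : Fin n) (h1 : ∑ j, a j = (Finset.Iic i).card) :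
    ∑ j, l j * a j ≤ ∑ j ∈ Finset.Iic i, l j := by
  have h2 : ∑ j, (l j - l i) * a j ≤ ∑ j, if j ∈ Finset.Iic i then l j - l i else 0 := by
    refine Finset.sum_le_sum fun j _ => ?_
    split_ifs with hj
    · exact mul_le_of_le_one_right (sub_nonneg.mpr (hl (Finset.mem_Iic.mp hj))) (ha1 j)
    · have hj' : i ≤ j := (not_le.mp fun h => hj (Finset.mem_Iic.mpr h)).le
      exact mul_nonpos_of_nonpos_of_nonneg (sub_nonpos.mpr (hl hj')) (ha j)
  simp only [sub_mul, Finset.sum_sub_distrib, ← Finset.mul_sum, h1, Finset.sum_ite_mem,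
    Finset.univ_inter, Finset.sum_const, nsmul_eq_mul] at h2
  linarith

/-- If the weights lie in `[0, 1]`, a weighted sum is at least the sum of the smallest entries. -/
lemma Antitone.sum_Ici_le_sum_mul (hl : Antitone l) (ha : ∀ j, 0 ≤ a j) (ha1 : ∀ j, a j ≤ 1)
    (i : Fin n) (h1 : ∑ j, a j = (Finset.Ici i).card) :
    ∑ j ∈ Finset.Ici i, l j ≤ ∑ j, l j * a j := by
  have h2 : ∑ j, (l i - l j) * a j ≤ ∑ j, if j ∈ Finset.Ici i then l i - l j else 0 := by
    refine Finset.sum_le_sum fun j _ => ?_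
    split_ifs with hj
    · exact mul_le_of_le_one_right (sub_nonneg.mpr (hl (Finset.mem_Ici.mp hj))) (ha1 j)
    · have hj' : j ≤ i := (not_le.mp fun h => hj (Finset.mem_Ici.mpr h)).le
      exact mul_nonpos_of_nonpos_of_nonneg (sub_nonpos.mpr (hl hj')) (ha j)
  simp only [sub_mul, Finset.sum_sub_distrib, ← Finset.mul_sum, h1, Finset.sum_ite_mem,
    Finset.univ_inter, Finset.sum_const, nsmul_eq_mul] at h2
  linarith

end WeightedSums

section Frames

/-- `g` is a Parseval frame. -/
def IsParsevalFrame {m n : ℕ} (g : Fin m → EuclideanSpace ℂ (Fin n)) : Prop :=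
  ∀ w, ∑ j, ‖inner ℂ (g j) w‖ ^ 2 = ‖w‖ ^ 2

lemma isParsevalFrame_of_conjTranspose_mul_self {m n : ℕ} {G : Matrix (Fin m) (Fin n) ℂ}
    (hG : Gᴴ * G = 1) : IsParsevalFrame fun j => WithLp.toLp 2 (star (G j)) := by
  intro w
  have h := ofReal_sum_mul_norm_inner_sq G 1 w
  simp only [Pi.one_apply, Complex.ofReal_one, one_mul, diagonal_one, Matrix.mul_one, hG,
    one_mulVec] at h
  rw [EuclideanSpace.norm_sq_eq]
  apply Complex.ofReal_injective
  rw [h]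
  simp [dotProduct, Complex.conj_mul']

variable {m n : ℕ} {g : Fin m → EuclideanSpace ℂ (Fin n)}

lemma IsParsevalFrame.norm_sq_le_one (hg : IsParsevalFrame g) (j : Fin m) : ‖g j‖ ^ 2 ≤ 1 := by
  have h := Finset.single_le_sum (f := fun i => ‖inner ℂ (g i) (g j)‖ ^ 2)
    (fun i _ => by positivity) (Finset.mem_univ j)
  rw [hg (g j)] at h
  simp only [inner_self_eq_norm_sq_to_K, norm_pow, RCLike.norm_ofReal, abs_norm] at h
  by_contra! hc
  nlinarith

lemma sum_norm_inner_single_sq (x : EuclideanSpace ℂ (Fin n)) :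
    ∑ k, ‖inner ℂ x (EuclideanSpace.single k (1 : ℂ))‖ ^ 2 = ‖x‖ ^ 2 := by
  rw [EuclideanSpace.norm_sq_eq]
  simp [EuclideanSpace.inner_single_right]

lemma IsParsevalFrame.sum_norm_sq (hg : IsParsevalFrame g) : ∑ j, ‖g j‖ ^ 2 = n := by
  simp only [← sum_norm_inner_single_sq]
  rw [Finset.sum_comm]
  simp [hg _]

lemma norm_inner_sq_add_le {x p z : EuclideanSpace ℂ (Fin n)} (hp : ‖p‖ = 1) (hz : ‖z‖ = 1)
    (hzp : inner ℂ p z = 0) : ‖inner ℂ x p‖ ^ 2 + ‖inner ℂ x z‖ ^ 2 ≤ ‖x‖ ^ 2 := by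
  have ho : Orthonormal ℂ ![p, z] := by
    simp [orthonormal_vecCons_iff, hp, hz, hzp]
  have := ho.sum_inner_products_le x (s := Finset.univ)
  simpa [Fin.sum_univ_two, norm_inner_symm] using this

lemma exists_unit_orthogonal_pair (a b : EuclideanSpace ℂ (Fin 3)) :
    ∃ w : EuclideanSpace ℂ (Fin 3), ‖w‖ = 1 ∧ inner ℂ a w = 0 ∧ inner ℂ b w = 0 := by
  have h2 : Module.finrank ℂ (Submodule.span ℂ {a, b}) ≤ 2 :=
    (finrank_span_le_card {a, b}).trans (by simpa using Finset.card_le_two)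
  have h3 := (Submodule.span ℂ {a, b}).finrank_add_finrank_orthogonal
  rw [finrank_euclideanSpace, Fintype.card_fin] at h3
  have : 0 < Module.finrank ℂ (Submodule.span ℂ {a, b})ᗮ := by omega
  have := Module.finrank_pos_iff.mp this
  obtain ⟨⟨w, hw⟩, hw0⟩ := exists_ne (0 : (Submodule.span ℂ {a, b})ᗮ)
  have hw0 : w ≠ 0 := fun h => hw0 (by simp [h])
  rw [Submodule.mem_orthogonal] at hw
  refine ⟨((‖w‖ : ℂ)⁻¹) • w, ?_, ?_, ?_⟩
  · exact norm_smul_inv_norm hw0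
  · rw [inner_smul_right, hw a (Submodule.subset_span (by simp)), mul_zero]
  · rw [inner_smul_right, hw b (Submodule.subset_span (by simp)), mul_zero]

end Frames

section PairTrace

variable {m n : ℕ} {g : Fin m → EuclideanSpace ℂ (Fin n)} {p r z : EuclideanSpace ℂ (Fin n)}

/-- The squared norms of the orthogonal projections of the `g j` to the complement of the
unit vector `z`. -/
noncomputable def coWeight (g : Fin m → EuclideanSpace ℂ (Fin n)) (z : EuclideanSpace ℂ (Fin n))
    (j : Fin m) : ℝ := ‖g j‖ ^ 2 - ‖inner ℂ (g j) z‖ ^ 2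

lemma coWeight_nonneg (hz : ‖z‖ = 1) (j : Fin m) : 0 ≤ coWeight g z j := by
  have := norm_inner_le_norm (𝕜 := ℂ) (g j) z
  rw [hz, mul_one] at this
  exact sub_nonneg.mpr (pow_le_pow_left₀ (norm_nonneg _) this 2)

lemma coWeight_le_one (hg : IsParsevalFrame g) (j : Fin m) : coWeight g z j ≤ 1 :=
  (sub_le_self _ (by positivity)).trans (hg.norm_sq_le_one j)

lemma sum_coWeight (hg : IsParsevalFrame g) (hz : ‖z‖ = 1) :
    ∑ j, coWeight g z j = (n : ℝ) - 1 := by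
  simp [coWeight, Finset.sum_sub_distrib, hg.sum_norm_sq, hg z, hz]

lemma norm_inner_sq_le_coWeight (hp : ‖p‖ = 1) (hz : ‖z‖ = 1) (hpz : inner ℂ p z = 0) (j : Fin m) :
    ‖inner ℂ (g j) p‖ ^ 2 ≤ coWeight g z j :=
  le_sub_iff_add_le.mpr (norm_inner_sq_add_le hp hz hpz)

lemma coWeight_eq_zero {g : Fin m → EuclideanSpace ℂ (Fin 3)} {p r z : EuclideanSpace ℂ (Fin 3)}
    (hp : ‖p‖ = 1) (hr : ‖r‖ = 1) (hz : ‖z‖ = 1)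
    (hpr : inner ℂ p r = 0) (hpz : inner ℂ p z = 0) (hrz : inner ℂ r z = 0) {j : Fin m}
    (h1 : inner ℂ (g j) p = 0) (h2 : inner ℂ (g j) r = 0) : coWeight g z j = 0 := by
  have ho : Orthonormal ℂ ![p, r, z] := by
    simp [orthonormal_vecCons_iff, hp, hr, hz, hpr, hpz, hrz]
  obtain ⟨b, hb⟩ := (ho.comp (fun i : (Set.univ : Set (Fin 3)) => i.1)
    Subtype.val_injective).exists_orthonormalBasis_extension_of_card_eq (v := ![p, r, z]) (by simp)
  have := b.sum_sq_norm_inner_left (g j)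
  simp only [Fin.sum_univ_three, hb _ (Set.mem_univ _)] at this
  simp [h1, h2] at this
  rw [coWeight, ← this, sub_self]

variable {l : Fin m → ℝ}

lemma sum_mul_coWeight_le {g : Fin m → EuclideanSpace ℂ (Fin 3)} {p z : EuclideanSpace ℂ (Fin 3)}
    (hl : Antitone l) (hg : IsParsevalFrame g) (hp : ‖p‖ = 1) (hz : ‖z‖ = 1)
    (hpz : inner ℂ p z = 0) (i k : Fin m) (hk : ∀ j < k, inner ℂ (g j) p = 0)
    (hi : ∀ j < i, coWeight g z j = 0) : ∑ j, l j * coWeight g z j ≤ l i + l k := by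
  have hle := norm_inner_sq_le_coWeight (g := g) hp hz hpz
  have h1 := hl.sum_mul_le (a := fun j => ‖inner ℂ (g j) p‖ ^ 2) (fun j => by positivity)
    (by rw [hg p, hp, one_pow]) k (fun j hj => by simp [hk j hj])
  have h2 := hl.sum_mul_le (a := fun j => coWeight g z j - ‖inner ℂ (g j) p‖ ^ 2)
    (fun j => sub_nonneg.mpr (hle j))
    (by rw [Finset.sum_sub_distrib, sum_coWeight hg hz, hg p, hp]; norm_num) i
    (fun j hj => by
      have := hle j
      rw [hi j hj] at this ⊢
      linarith [sq_nonneg ‖inner ℂ (g j) p‖])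
  simp only [mul_sub, Finset.sum_sub_distrib] at h2
  linarith

lemma le_sum_mul_coWeight {g : Fin m → EuclideanSpace ℂ (Fin 3)} {p z : EuclideanSpace ℂ (Fin 3)}
    (hl : Antitone l) (hg : IsParsevalFrame g) (hp : ‖p‖ = 1) (hz : ‖z‖ = 1)
    (hpz : inner ℂ p z = 0) (i k : Fin m) (hi : ∀ j, i < j → inner ℂ (g j) p = 0)
    (hk : ∀ j, k < j → coWeight g z j = 0) : l i + l k ≤ ∑ j, l j * coWeight g z j := by
  have hle := norm_inner_sq_le_coWeight (g := g) hp hz hpz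
  have h1 := hl.le_sum_mul (a := fun j => ‖inner ℂ (g j) p‖ ^ 2) (fun j => by positivity)
    (by rw [hg p, hp, one_pow]) i (fun j hj => by simp [hi j hj])
  have h2 := hl.le_sum_mul (a := fun j => coWeight g z j - ‖inner ℂ (g j) p‖ ^ 2)
    (fun j => sub_nonneg.mpr (hle j))
    (by rw [Finset.sum_sub_distrib, sum_coWeight hg hz, hg p, hp]; norm_num) k
    (fun j hj => by
      have := hle j
      rw [hk j hj] at this ⊢
      linarith [sq_nonneg ‖inner ℂ (g j) p‖])
  simp only [mul_sub, Finset.sum_sub_distrib] at h2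
  linarith

end PairTrace

/-- The thirteen inequalities between `l` and `t`. -/
def HornIneqs (l : Fin 6 → ℝ) (t : Fin 3 → ℝ) : Prop :=
  t 0 ≤ l 0 - l 5 ∧ t 1 ≤ l 1 - l 5 ∧ t 1 ≤ l 0 - l 4 ∧
  t 2 ≤ l 0 - l 3 ∧ t 2 ≤ l 1 - l 4 ∧ t 2 ≤ l 2 - l 5 ∧
  t 0 + t 1 ≤ l 0 + l 1 - l 4 - l 5 ∧
  t 0 + t 2 ≤ l 0 + l 1 - l 3 - l 5 ∧
  t 0 + t 2 ≤ l 0 + l 2 - l 4 - l 5 ∧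
  t 1 + t 2 ≤ l 0 + l 1 - l 3 - l 4 ∧
  t 1 + t 2 ≤ l 0 + l 2 - l 3 - l 5 ∧
  t 1 + t 2 ≤ l 1 + l 2 - l 4 - l 5 ∧
  t 0 + t 1 + t 2 ≤ l 0 + l 1 + l 2 - l 3 - l 4 - l 5

section Necessity

variable {g h : Fin 6 → EuclideanSpace ℂ (Fin 3)} {l : Fin 6 → ℝ} {t : Fin 3 → ℝ}

/-- The difference of the two quadratic forms with eigenvalue data `l` in the frames `g`, `h`
is the diagonal form `t`. -/
def FormsDiffer (g h : Fin 6 → EuclideanSpace ℂ (Fin 3)) (l : Fin 6 → ℝ) (t : Fin 3 → ℝ) : Prop :=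
  ∀ w, ∑ j, l j * ‖inner ℂ (g j) w‖ ^ 2 - ∑ j, l j * ‖inner ℂ (h j) w‖ ^ 2 =
    ∑ k, t k * ‖w k‖ ^ 2

lemma FormsDiffer.trace (hq : FormsDiffer g h l t) :
    ∑ j, l j * ‖g j‖ ^ 2 - ∑ j, l j * ‖h j‖ ^ 2 = ∑ k, t k := by
  have hs : ∀ f : Fin 6 → EuclideanSpace ℂ (Fin 3), ∑ j, l j * ‖f j‖ ^ 2 =
      ∑ k, ∑ j, l j * ‖inner ℂ (f j) (EuclideanSpace.single k (1 : ℂ))‖ ^ 2 := fun f => by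
    rw [Finset.sum_comm]
    simp only [← sum_norm_inner_single_sq, Finset.mul_sum]
  rw [hs, hs, ← Finset.sum_sub_distrib]
  refine Finset.sum_congr rfl fun k _ => ?_
  rw [hq]
  simp [apply_ite]

lemma FormsDiffer.coTrace (hq : FormsDiffer g h l t) (z : EuclideanSpace ℂ (Fin 3)) :
    ∑ j, l j * coWeight g z j - ∑ j, l j * coWeight h z j = ∑ k, t k - ∑ k, t k * ‖z k‖ ^ 2 := by
  rw [← hq.trace, ← hq z]
  simp only [coWeight, mul_sub, Finset.sum_sub_distrib]
  ring

lemma sum_norm_apply_sq {n : ℕ} {w : EuclideanSpace ℂ (Fin n)} (hw : ‖w‖ = 1) :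
    ∑ k, ‖w k‖ ^ 2 = 1 := by
  rw [← EuclideanSpace.norm_sq_eq, hw, one_pow]

lemma FormsDiffer.le_of_unit (hq : FormsDiffer g h l t) (hg : IsParsevalFrame g)
    (hh : IsParsevalFrame h) (hl : Antitone l) (ht : Antitone t) {w : EuclideanSpace ℂ (Fin 3)}
    (hw : ‖w‖ = 1) (i i' : Fin 6) (k : Fin 3) (hi : ∀ j < i, inner ℂ (g j) w = 0)
    (hi' : ∀ j, i' < j → inner ℂ (h j) w = 0) (hk : ∀ j, k < j → w j = 0) : t k ≤ l i - l i' := by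
  have h1 := hl.sum_mul_le (a := fun j => ‖inner ℂ (g j) w‖ ^ 2) (fun j => by positivity)
    (by rw [hg w, hw, one_pow]) i (fun j hj => by simp [hi j hj])
  have h2 := hl.le_sum_mul (a := fun j => ‖inner ℂ (h j) w‖ ^ 2) (fun j => by positivity)
    (by rw [hh w, hw, one_pow]) i' (fun j hj => by simp [hi' j hj])
  have h3 := ht.le_sum_mul (a := fun j => ‖w j‖ ^ 2) (fun j => by positivity)
    (sum_norm_apply_sq hw) k (fun j hj => by simp [hk j hj])
  linarith [hq w]

theorem FormsDiffer.hornIneqs (hq : FormsDiffer g h l t) (hg : IsParsevalFrame g)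
    (hh : IsParsevalFrame h) (hl : Antitone l) (ht : Antitone t) : HornIneqs l t := by
  let e : Fin 3 → EuclideanSpace ℂ (Fin 3) := fun k => EuclideanSpace.single k 1
  have he : ∀ {k w}, inner ℂ (e k) w = 0 → w k = 0 := fun {k w} h0 => by
    simpa [e, EuclideanSpace.inner_single_left] using h0
  -- the diagonal form on the complement of a unit vector
  have hz2 : ∀ {z : EuclideanSpace ℂ (Fin 3)} (i : Fin 3), ‖z‖ = 1 → (∀ j < i, z j = 0) →
      t 0 + t 1 + t 2 - t i ≤ ∑ k, t k - ∑ k, t k * ‖z k‖ ^ 2 := fun {z} i hz h0 => by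
    have := ht.sum_mul_le (a := fun j => ‖z j‖ ^ 2) (fun j => by positivity)
      (sum_norm_apply_sq hz) i (fun j hj => by simp [h0 j hj])
    rw [Fin.sum_univ_three t]
    linarith
  have hup : ∀ {z : EuclideanSpace ℂ (Fin 3)}, ‖z‖ = 1 →
      ∑ j, l j * coWeight g z j ≤ l 0 + l 1 := fun {z} hz => by
    have := hl.sum_mul_le_sum_Iic (coWeight_nonneg (g := g) hz) (coWeight_le_one hg) 1
      (by rw [sum_coWeight hg hz]; simp; norm_num)
    rwa [show Finset.Iic (1 : Fin 6) = {0, 1} from rfl, Finset.sum_pair (by decide)] at this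
  have hlo : ∀ {z : EuclideanSpace ℂ (Fin 3)}, ‖z‖ = 1 →
      l 4 + l 5 ≤ ∑ j, l j * coWeight h z j := fun {z} hz => by
    have := hl.sum_Ici_le_sum_mul (coWeight_nonneg (g := h) hz) (coWeight_le_one hh) 4
      (by rw [sum_coWeight hh hz]; simp; norm_num)
    rwa [show Finset.Ici (4 : Fin 6) = {4, 5} from rfl, Finset.sum_pair (by decide)] at this
  refine ⟨?_, ?_, ?_, ?_, ?_, ?_, ?_, ?_, ?_, ?_, ?_, ?_, ?_⟩
  · obtain ⟨w, hw, h1, h2⟩ := exists_unit_orthogonal_pair (e 1) (e 2)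
    replace h1 := he h1
    replace h2 := he h2
    exact hq.le_of_unit hg hh hl ht hw 0 5 0 (by lia) (by lia) (fun | 1, _ => h1 | 2, _ => h2)
  · obtain ⟨w, hw, h1, h2⟩ := exists_unit_orthogonal_pair (g 0) (e 2)
    replace h2 := he h2
    exact hq.le_of_unit hg hh hl ht hw 1 5 1 (fun | 0, _ => h1) (by lia) (fun | 2, _ => h2)
  · obtain ⟨w, hw, h1, h2⟩ := exists_unit_orthogonal_pair (h 5) (e 2)
    replace h2 := he h2
    exact hq.le_of_unit hg hh hl ht hw 0 4 1 (by lia) (fun | 5, _ => h1) (fun | 2, _ => h2)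
  · obtain ⟨w, hw, h1, h2⟩ := exists_unit_orthogonal_pair (h 5) (h 4)
    exact hq.le_of_unit hg hh hl ht hw 0 3 2 (by lia) (fun | 4, _ => h2 | 5, _ => h1) (by lia)
  · obtain ⟨w, hw, h1, h2⟩ := exists_unit_orthogonal_pair (g 0) (h 5)
    exact hq.le_of_unit hg hh hl ht hw 1 4 2 (fun | 0, _ => h1) (fun | 5, _ => h2) (by lia)
  · obtain ⟨w, hw, h1, h2⟩ := exists_unit_orthogonal_pair (g 0) (g 1)
    exact hq.le_of_unit hg hh hl ht hw 2 5 2 (fun | 0, _ => h1 | 1, _ => h2) (by lia) (by lia)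
  · obtain ⟨z, hz, h1, h2⟩ := exists_unit_orthogonal_pair (e 0) (e 1)
    replace h1 := he h1
    replace h2 := he h2
    linarith [hq.coTrace z, hup hz, hlo hz, hz2 2 hz (fun | 0, _ => h1 | 1, _ => h2)]
  · obtain ⟨p, hp, h1, h2⟩ := exists_unit_orthogonal_pair (h 4) (h 5)
    obtain ⟨z, hz, hpz, h3⟩ := exists_unit_orthogonal_pair p (e 0)
    replace h3 := he h3
    linarith [hq.coTrace z, hup hz, hz2 1 hz (fun | 0, _ => h3),
      le_sum_mul_coWeight hl hh hp hz hpz 3 5 (fun | 4, _ => h1 | 5, _ => h2) (by lia)]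
  · obtain ⟨p, hp, h1, h2⟩ := exists_unit_orthogonal_pair (g 0) (g 1)
    obtain ⟨z, hz, hpz, h3⟩ := exists_unit_orthogonal_pair p (e 0)
    replace h3 := he h3
    linarith [hq.coTrace z, hlo hz, hz2 1 hz (fun | 0, _ => h3),
      sum_mul_coWeight_le hl hg hp hz hpz 0 2 (fun | 0, _ => h1 | 1, _ => h2) (by lia)]
  · obtain ⟨p, hp, h1, h2⟩ := exists_unit_orthogonal_pair (h 4) (h 5)
    obtain ⟨r, hr, hpr, h3⟩ := exists_unit_orthogonal_pair p (h 5)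
    obtain ⟨z, hz, hpz, hrz⟩ := exists_unit_orthogonal_pair p r
    have h5 : coWeight h z 5 = 0 := coWeight_eq_zero hp hr hz hpr hpz hrz h2 h3
    linarith [hq.coTrace z, hup hz, hz2 0 hz (by lia),
      le_sum_mul_coWeight hl hh hp hz hpz 3 4 (fun | 4, _ => h1 | 5, _ => h2) (fun | 5, _ => h5)]
  · obtain ⟨p, hp, h1, h2⟩ := exists_unit_orthogonal_pair (g 0) (g 1)
    obtain ⟨q, hq', h3, h4⟩ := exists_unit_orthogonal_pair (h 4) (h 5)
    obtain ⟨z, hz, hpz, hqz⟩ := exists_unit_orthogonal_pair p q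
    linarith [hq.coTrace z, hz2 0 hz (by lia),
      sum_mul_coWeight_le hl hg hp hz hpz 0 2 (fun | 0, _ => h1 | 1, _ => h2) (by lia),
      le_sum_mul_coWeight hl hh hq' hz hqz 3 5 (fun | 4, _ => h3 | 5, _ => h4) (by lia)]
  · obtain ⟨p, hp, h1, h2⟩ := exists_unit_orthogonal_pair (g 0) (g 1)
    obtain ⟨r, hr, hpr, h3⟩ := exists_unit_orthogonal_pair p (g 0)
    obtain ⟨z, hz, hpz, hrz⟩ := exists_unit_orthogonal_pair p r
    have h5 : coWeight g z 0 = 0 := coWeight_eq_zero hp hr hz hpr hpz hrz h1 h3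
    linarith [hq.coTrace z, hlo hz, hz2 0 hz (by lia),
      sum_mul_coWeight_le hl hg hp hz hpz 1 2 (fun | 0, _ => h1 | 1, _ => h2) (fun | 0, _ => h5)]
  · have h1 := hl.sum_mul_le_sum_Iic (fun j => sq_nonneg ‖g j‖) hg.norm_sq_le_one 2
      (by rw [hg.sum_norm_sq]; simp)
    have h2 := hl.sum_Ici_le_sum_mul (fun j => sq_nonneg ‖h j‖) hh.norm_sq_le_one 3
      (by rw [hh.sum_norm_sq]; simp)
    rw [show Finset.Iic (2 : Fin 6) = {0, 1, 2} from rfl, Finset.sum_insert (by decide),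
      Finset.sum_pair (by decide)] at h1
    rw [show Finset.Ici (3 : Fin 6) = {3, 4, 5} from rfl, Finset.sum_insert (by decide),
      Finset.sum_pair (by decide)] at h2
    have h3 := hq.trace
    rw [Fin.sum_univ_three t] at h3
    linarith

end Necessity

theorem hornIneqs_of_mem_coneA {l : Fin (3 + 3) → ℝ} {s : Fin 3 → ℝ} (hs : Antitone s)
    (h : (l, s) ∈ coneA 3 3) : HornIneqs l (fun k => 2 * s k) := by
  obtain ⟨X, hX, hl, hsv⟩ := h
  obtain ⟨G, H, hG, hH, hGH⟩ := exists_compressions X hX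
  simp only at hl hsv
  simp only [← hl, ← hsv] at hGH
  refine FormsDiffer.hornIneqs (g := fun j => WithLp.toLp 2 (star (G j)))
    (h := fun j => WithLp.toLp 2 (star (H j))) (fun w => ?_)
    (isParsevalFrame_of_conjTranspose_mul_self hG) (isParsevalFrame_of_conjTranspose_mul_self hH)
    (hl ▸ eigVec_antitone X hX) (fun i j hij => by have := hs hij; linarith)
  apply Complex.ofReal_injective
  rw [Complex.ofReal_sub, ofReal_sum_mul_norm_inner_sq G, ofReal_sum_mul_norm_inner_sq H,
    ← dotProduct_sub, ← sub_mulVec, hGH]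
  simp only [dotProduct, mulVec_diagonal, Pi.star_apply]
  push_cast
  refine Finset.sum_congr rfl fun k _ => ?_
  rw [← Complex.mul_conj']
  simp only [RCLike.star_def]
  ring

section BlockSpectrum

variable {ι κ : Type*} [Fintype ι] [DecidableEq ι] [Fintype κ] [DecidableEq κ]

/-- `p` is the characteristic polynomial of a Hermitian `2 × 2` block matrix whose off-diagonal
blocks are `diagonal s`. -/
def IsBlockSpectrum (s : ι → ℝ) (p : Polynomial ℂ) : Prop :=
  ∃ A C : Matrix ι ι ℂ, A.IsHermitian ∧ C.IsHermitian ∧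
    (fromBlocks A (diagonal fun i => (s i : ℂ)) (diagonal fun i => (s i : ℂ)) C).charpoly = p

lemma IsBlockSpectrum.mem_coneA {n : ℕ} {l : Fin (n + n) → ℝ} {s : Fin n → ℝ}
    (h : IsBlockSpectrum s (∏ i, (Polynomial.X - Polynomial.C (l i : ℂ))))
    (hl : Antitone l) (hs : Antitone s) (hs0 : ∀ i, 0 ≤ s i) : (l, s) ∈ coneA n n := by
  obtain ⟨A, C, hA, hC, hp⟩ := h
  set F := fromBlocks A (diagonal fun i => (s i : ℂ)) (diagonal fun i => (s i : ℂ)) C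
  have hF : F.IsHermitian := hA.fromBlocks (by
    rw [diagonal_conjTranspose]; congr 1; ext i; simp) hC
  have hX : (F.submatrix finSumFinEquiv.symm finSumFinEquiv.symm).IsHermitian := hF.submatrix _
  refine ⟨_, hX, ?_, fun i => ?_⟩
  · refine (eigVec_eq_of_charpoly hX hl ?_).symm
    rw [← hp, ← charpoly_reindex finSumFinEquiv F]
    rfl
  · rw [show blockTR n n (F.submatrix finSumFinEquiv.symm finSumFinEquiv.symm) =
      diagonal fun i => (s i : ℂ) from ?_]
    · exact (sval_diagonal hs hs0 i).symm
    · ext i j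
      rw [blockTR, submatrix_apply, submatrix_apply, finSumFinEquiv_symm_apply_castAdd,
        finSumFinEquiv_symm_apply_natAdd]
      rfl

lemma IsBlockSpectrum.comp_equiv {s : ι → ℝ} {p : Polynomial ℂ} (h : IsBlockSpectrum s p)
    (e : κ ≃ ι) : IsBlockSpectrum (s ∘ e) p := by
  obtain ⟨A, C, hA, hC, hp⟩ := h
  refine ⟨A.submatrix e e, C.submatrix e e, hA.submatrix e, hC.submatrix e, ?_⟩
  rw [← hp, ← charpoly_reindex (e.sumCongr e).symm]
  congr 1
  ext (i | i) (j | j) <;> simp [diagonal_apply]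

lemma IsBlockSpectrum.sumElim {s : ι → ℝ} {t : κ → ℝ} {p q : Polynomial ℂ}
    (h : IsBlockSpectrum s p) (h' : IsBlockSpectrum t q) :
    IsBlockSpectrum (Sum.elim s t) (p * q) := by
  obtain ⟨A, C, hA, hC, hp⟩ := h
  obtain ⟨A', C', hA', hC', hq⟩ := h'
  refine ⟨fromBlocks A 0 0 A', fromBlocks C 0 0 C', hA.fromBlocks (by simp) hA',
    hC.fromBlocks (by simp) hC', ?_⟩
  rw [← hp, ← hq, ← charpoly_fromBlocks_zero₁₂ (M₂₁ := 0),
    ← charpoly_reindex (Equiv.sumSumSumComm ι κ ι κ)]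
  congr 1
  ext ((i | i) | (i | i)) ((j | j) | (j | j)) <;> simp [diagonal_apply]

lemma IsBlockSpectrum.insertNth {n : ℕ} {s : Fin (n + 1) → ℝ} (k : Fin (n + 1))
    {p q : Polynomial ℂ} (h : IsBlockSpectrum (fun i => s (k.succAbove i)) p)
    (h' : IsBlockSpectrum (fun _ : PUnit.{1} => s k) q) : IsBlockSpectrum s (p * q) := by
  convert (h.sumElim h').comp_equiv ((finSuccEquiv' k).trans (Equiv.optionEquivSumPUnit.{_, 0} _))
    using 1
  ext i
  rcases Fin.eq_self_or_eq_succAbove k i with rfl | ⟨j, rfl⟩ <;> simp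

lemma exists_sq_add_sq_eq_one_mul_eq {x : ℝ} (hx : 0 ≤ x) (hx' : x ≤ 1 / 2) :
    ∃ c s : ℝ, c ^ 2 + s ^ 2 = 1 ∧ c * s = x := by
  have h1 := Real.sq_sqrt (show 0 ≤ 1 + 2 * x by linarith)
  have h2 := Real.sq_sqrt (show 0 ≤ 1 - 2 * x by linarith)
  refine ⟨(√(1 + 2 * x) + √(1 - 2 * x)) / 2, (√(1 + 2 * x) - √(1 - 2 * x)) / 2, ?_, ?_⟩
  · linear_combination (1 / 2) * h1 + (1 / 2) * h2
  · linear_combination (1 / 4) * h1 - (1 / 4) * h2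

lemma isBlockSpectrum_of_sub_eq {P Q : Matrix ι ι ℂ} {d : ι → ℝ} (hP : P.IsHermitian)
    (hQ : Q.IsHermitian) (hPQ : P - Q = diagonal fun i => (d i : ℂ)) {x : ℝ} (hx : 0 ≤ x)
    (hx' : x ≤ 1 / 2) : IsBlockSpectrum (fun i => x * d i) (P.charpoly * Q.charpoly) := by
  obtain ⟨c, s, hcs, hx⟩ := exists_sq_add_sq_eq_one_mul_eq hx hx'
  have hcs' : (c : ℂ) ^ 2 + (s : ℂ) ^ 2 = 1 := mod_cast hcs
  let R : Matrix (ι ⊕ ι) (ι ⊕ ι) ℂ :=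
    fromBlocks ((c : ℂ) • 1) (-(s : ℂ) • 1) ((s : ℂ) • 1) ((c : ℂ) • 1)
  let R' : Matrix (ι ⊕ ι) (ι ⊕ ι) ℂ :=
    fromBlocks ((c : ℂ) • 1) ((s : ℂ) • 1) (-(s : ℂ) • 1) ((c : ℂ) • 1)
  have h1 : R * R' = 1 := by
    simp only [R, R', fromBlocks_multiply, ← fromBlocks_one]
    congr 1 <;> simp only [smul_mul_assoc, mul_smul_comm, one_mul] <;> match_scalars <;>
      first | linear_combination hcs' | ring
  have h2 : R' * R = 1 := mul_eq_one_comm.mp h1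
  refine ⟨(c ^ 2 : ℂ) • P + (s ^ 2 : ℂ) • Q, (s ^ 2 : ℂ) • P + (c ^ 2 : ℂ) • Q, ?_, ?_, ?_⟩
  · simp [IsHermitian, hP.eq, hQ.eq]
  · simp [IsHermitian, hP.eq, hQ.eq]
  · have h3 : (R * fromBlocks P 0 0 Q * R').charpoly = P.charpoly * Q.charpoly := by
      rw [charpoly_mul_comm, ← Matrix.mul_assoc, h2, Matrix.one_mul, charpoly_fromBlocks_zero₁₂]
    have hB : (diagonal fun i => ((x * d i : ℝ) : ℂ)) = ((c : ℂ) * s) • (P - Q) := by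
      rw [hPQ, ← hx]
      ext i j
      simp [diagonal_apply]
    rw [← h3]
    simp only [hB, R, R', fromBlocks_multiply]
    congr 2 <;> simp only [smul_mul_assoc, mul_smul_comm, one_mul, mul_one, mul_zero, add_zero,
      zero_add] <;> module

lemma isBlockSpectrum_pair {a b s : ℝ} (hs : 0 ≤ s) (h : 2 * s ≤ a - b) :
    IsBlockSpectrum (fun _ : PUnit.{1} => s)
      ((Polynomial.X - Polynomial.C (a : ℂ)) * (Polynomial.X - Polynomial.C (b : ℂ))) := by
  have := isBlockSpectrum_of_sub_eq (P := diagonal fun _ : PUnit.{1} => (a : ℂ))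
    (Q := diagonal fun _ : PUnit.{1} => (b : ℂ)) (d := fun _ => a - b) (x := s / (a - b))
    (isHermitian_diagonal_of_self_adjoint _ (by ext; simp))
    (isHermitian_diagonal_of_self_adjoint _ (by ext; simp)) (by simp) (div_nonneg hs (by linarith))
    (div_le_of_le_mul₀ (by linarith) (by norm_num) (by linarith))
  rw [charpoly_diagonal, charpoly_diagonal] at this
  convert this using 2
  · rcases eq_or_ne (a - b) 0 with h0 | h0
    · rw [h0, mul_zero]; linarith
    · field_simp
  all_goals simp

end BlockSpectrum

lemma exists_tight_scale {ι : Type*} [Finite ι] {a b : ι → ℝ} (h : a ≤ b) (h0 : ∃ i, 0 < a i) :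
    ∃ τ : ℝ, 1 ≤ τ ∧ (∀ i, τ * a i ≤ b i) ∧ ∃ i, τ * a i = b i := by
  have : Nonempty {i // 0 < a i} := let ⟨i, hi⟩ := h0; ⟨⟨i, hi⟩⟩
  obtain ⟨⟨i, hi⟩, hmin⟩ := Finite.exists_min fun i : {i // 0 < a i} => b i / a i
  have h1 : 1 ≤ b i / a i := (one_le_div hi).mpr (h i)
  refine ⟨b i / a i, h1, fun j => ?_, i, div_mul_cancel₀ _ hi.ne'⟩
  rcases lt_or_ge 0 (a j) with hj | hj
  · exact (le_div_iff₀ hj).mp (hmin ⟨j, hj⟩)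
  · nlinarith [h j]

lemma exists_sub_eq_diagonal_two {p₁ p₂ q₁ q₂ c₁ c₂ : ℝ} (hc : c₂ ≤ c₁) (h1 : c₁ ≤ p₁ - q₂)
    (h2 : c₂ ≤ p₁ - q₁) (h3 : c₂ ≤ p₂ - q₂) (ht : c₁ + c₂ = p₁ + p₂ - q₁ - q₂) :
    ∃ P Q : Matrix (Fin 2) (Fin 2) ℂ, P.IsHermitian ∧ Q.IsHermitian ∧
      (P - Q = diagonal fun i => ((![c₁, c₂] i : ℝ) : ℂ)) ∧
      P.charpoly = (Polynomial.X - Polynomial.C (p₁ : ℂ)) * (Polynomial.X - Polynomial.C (p₂ : ℂ)) ∧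
      Q.charpoly = (Polynomial.X - Polynomial.C (q₁ : ℂ)) *
        (Polynomial.X - Polynomial.C (q₂ : ℂ)) := by
  obtain ⟨x, y, hx, hy⟩ : ∃ x y : ℝ, (c₁ - c₂) * x = q₁ * q₂ - p₁ * p₂ - c₁ * c₂ + c₁ * (p₁ + p₂) ∧
      y ^ 2 = (p₁ - x) * (x - p₂) := by
    rcases hc.eq_or_lt with rfl | hc
    · refine ⟨p₁, 0, ?_, by ring⟩
      obtain rfl : q₁ = p₁ - c₂ := by linarith
      obtain rfl : q₂ = p₂ - c₂ := by linarith
      ring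
    · set x := (q₁ * q₂ - p₁ * p₂ - c₁ * c₂ + c₁ * (p₁ + p₂)) / (c₁ - c₂) with hx
      have hx' : (c₁ - c₂) * x = q₁ * q₂ - p₁ * p₂ - c₁ * c₂ + c₁ * (p₁ + p₂) :=
        mul_div_cancel₀ _ (by linarith)
      refine ⟨x, √((p₁ - x) * (x - p₂)), hx', Real.sq_sqrt (mul_nonneg ?_ ?_)⟩
      · refine le_of_mul_le_mul_left (a := c₁ - c₂) ?_ (sub_pos.mpr hc)
        have : 0 ≤ (q₁ - (p₁ - c₁)) * (p₁ - c₁ - q₂) := mul_nonneg (by linarith) (by linarith)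
        obtain rfl : p₂ = c₁ + c₂ - p₁ + q₁ + q₂ := by linarith
        nlinarith
      · refine le_of_mul_le_mul_left (a := c₁ - c₂) ?_ (sub_pos.mpr hc)
        have : 0 ≤ (p₁ - c₂ - q₁) * (p₁ - c₂ - q₂) := mul_nonneg (by linarith) (by linarith)
        obtain rfl : p₂ = c₁ + c₂ - p₁ + q₁ + q₂ := by linarith
        nlinarith
  have hx' : ((c₁ : ℂ) - c₂) * x = q₁ * q₂ - p₁ * p₂ - c₁ * c₂ + c₁ * (p₁ + p₂) := mod_cast hx
  have hy' : (y : ℂ) ^ 2 = (p₁ - x) * (x - p₂) := mod_cast hy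
  have ht' : (c₁ : ℂ) + c₂ = p₁ + p₂ - q₁ - q₂ := mod_cast ht
  refine ⟨!![(x : ℂ), y; y, p₁ + p₂ - x], !![(x : ℂ) - c₁, y; y, p₁ + p₂ - x - c₂],
    ?_, ?_, ?_, ?_, ?_⟩
  · ext i j
    fin_cases i <;> fin_cases j <;> simp
  · ext i j
    fin_cases i <;> fin_cases j <;> simp
  · ext i j
    fin_cases i <;> fin_cases j <;> simp
  · refine Polynomial.funext fun r => ?_
    simp [eval_charpoly, det_fin_two, scalar_apply]
    linear_combination -hy'
  · refine Polynomial.funext fun r => ?_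
    simp [eval_charpoly, det_fin_two, scalar_apply]
    linear_combination -hy' + hx' + r * ht'

section

open Polynomial

lemma isBlockSpectrum_two {a b c d : ℝ} {s : Fin 2 → ℝ} (hs : s 1 ≤ s 0) (hs0 : 0 ≤ s 1)
    (h1 : 2 * s 0 ≤ a - d) (h2 : 2 * s 1 ≤ a - c) (h3 : 2 * s 1 ≤ b - d)
    (h4 : 2 * (s 0 + s 1) ≤ a + b - c - d) :
    IsBlockSpectrum s ((X - C (a : ℂ)) * (X - C (b : ℂ)) * (X - C (c : ℂ)) * (X - C (d : ℂ))) := by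
  have split : ∀ {x₁ y₁ x₂ y₂ : ℝ}, 2 * s 0 ≤ x₁ - y₁ → 2 * s 1 ≤ x₂ - y₂ →
      IsBlockSpectrum s (((X - C (x₁ : ℂ)) * (X - C (y₁ : ℂ))) *
        ((X - C (x₂ : ℂ)) * (X - C (y₂ : ℂ)))) := fun {x₁ y₁ x₂ y₂} h h' => by
    refine IsBlockSpectrum.insertNth 1 ?_ (isBlockSpectrum_pair hs0 h')
    convert (isBlockSpectrum_pair (hs0.trans hs) h).comp_equiv (Equiv.ofUnique (Fin 1) _) using 1
    ext i
    simp [Subsingleton.elim i 0]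
  rcases hs0.trans hs |>.eq_or_lt with h0 | h0
  · convert split (x₁ := a) (y₁ := c) (x₂ := b) (y₂ := d) (by linarith) (by linarith) using 1
    ring
  obtain ⟨τ, hτ, hle, i, hi⟩ := exists_tight_scale
    (a := ![2 * s 0, 2 * s 1, 2 * s 1, 2 * (s 0 + s 1)])
    (b := ![a - d, a - c, b - d, a + b - c - d])
    (by intro i; fin_cases i <;> simpa) ⟨0, by simpa⟩
  simp only [Fin.forall_fin_succ] at hle
  simp at hle
  have := le_mul_of_one_le_left (hs0.trans hs) hτ
  have := le_mul_of_one_le_left hs0 hτ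
  fin_cases i <;> simp at hi
  · convert split (x₁ := a) (y₁ := d) (x₂ := b) (y₂ := c) (by linarith) (by linarith) using 1
    ring
  · convert split (x₁ := b) (y₁ := d) (x₂ := a) (y₂ := c) (by linarith) (by linarith) using 1
    ring
  · convert split (x₁ := a) (y₁ := c) (x₂ := b) (y₂ := d) (by linarith) (by linarith) using 1
    ring
  · have := mul_le_mul_of_nonneg_left hs (zero_le_one.trans hτ)
    obtain ⟨P, Q, hP, hQ, hPQ, hp, hq⟩ := exists_sub_eq_diagonal_two (p₁ := a) (p₂ := b) (q₁ := c)
      (q₂ := d) (c₁ := 2 * (τ * s 0)) (c₂ := 2 * (τ * s 1)) (by linarith) (by linarith)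
      (by linarith) (by linarith) (by linarith)
    convert isBlockSpectrum_of_sub_eq hP hQ hPQ (x := 1 / (2 * τ)) (by positivity) ?_ using 1
    · ext i
      fin_cases i <;> simp <;> field_simp
    · rw [hp, hq]; ring
    · rw [div_le_div_iff₀ (by positivity) (by positivity)]; linarith

end

/-- A continuous function on the polygon `a₁ ≤ T - x - y`, `a₂ ≤ x ≤ b₂`, `a₃ ≤ y ≤ b₃` which is
nonnegative at the vertex `(a₂, a₃)` and nonpositive on the edge `T - x - y = a₁` has a zero. -/
lemma exists_eq_zero_of_polygon {a₁ a₂ a₃ b₂ b₃ T : ℝ} {f : ℝ → ℝ → ℝ}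
    (hf : Continuous fun x : ℝ × ℝ => f x.1 x.2) (h2 : a₂ ≤ b₂) (h3 : a₃ ≤ b₃)
    (hT : a₁ + a₂ + a₃ ≤ T) (hT' : T ≤ a₁ + b₂ + b₃) (h0 : 0 ≤ f a₂ a₃)
    (h1 : ∀ x y, x ∈ Set.Icc a₂ b₂ → y ∈ Set.Icc a₃ b₃ → x + y = T - a₁ → f x y ≤ 0) :
    ∃ x y, x ∈ Set.Icc a₂ b₂ ∧ y ∈ Set.Icc a₃ b₃ ∧ a₁ ≤ T - x - y ∧ f x y = 0 := by
  obtain ⟨x, y, hx, hy, hxy⟩ : ∃ x y, x ∈ Set.Icc a₂ b₂ ∧ y ∈ Set.Icc a₃ b₃ ∧ x + y = T - a₁ := by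
    refine ⟨min b₂ (T - a₁ - a₃), T - a₁ - min b₂ (T - a₁ - a₃), ⟨le_min h2 (by linarith),
      min_le_left _ _⟩, ⟨?_, ?_⟩, by ring⟩
    · linarith [min_le_right b₂ (T - a₁ - a₃)]
    · rcases min_cases b₂ (T - a₁ - a₃) with h | h <;> linarith
  have hg : Continuous fun t : ℝ => f (a₂ + t * (x - a₂)) (a₃ + t * (y - a₃)) :=
    hf.comp (by fun_prop : Continuous fun t : ℝ => (a₂ + t * (x - a₂), a₃ + t * (y - a₃)))
  obtain ⟨t, ⟨ht0, ht1⟩, ht⟩ := intermediate_value_Icc' zero_le_one hg.continuousOn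
    (show (0 : ℝ) ∈ Set.Icc _ _ from ⟨by simpa using h1 x y hx hy hxy, by simpa using h0⟩)
  have hx0 := mul_nonneg ht0 (sub_nonneg.mpr hx.1)
  have hy0 := mul_nonneg ht0 (sub_nonneg.mpr hy.1)
  have hx1 := mul_le_of_le_one_left (sub_nonneg.mpr hx.1) ht1
  have hy1 := mul_le_of_le_one_left (sub_nonneg.mpr hy.1) ht1
  refine ⟨_, _, ⟨?_, ?_⟩, ⟨?_, ?_⟩, ?_, ht⟩ <;> linarith [hx.2, hy.2]

lemma exists_interlacing {p₁ p₂ p₃ e₁ e₂ e₃ T : ℝ} (hp : p₂ ≤ p₁) (hp' : p₃ ≤ p₂) (he : e₂ ≤ e₁)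
    (he' : e₃ ≤ e₂) (h1 : p₁ ≠ e₁) (h2 : p₂ ≠ e₂) (h3 : p₂ ≤ e₁) (h4 : e₂ ≤ p₁) (h5 : p₃ ≤ e₂)
    (h6 : e₃ ≤ p₂) (h7 : max p₁ e₁ + max p₂ e₂ + max p₃ e₃ ≤ T)
    (h8 : T ≤ p₁ + e₁ + min p₂ e₂) :
    ∃ d₁ d₂ d₃ : ℝ, d₂ < d₁ ∧ d₃ < d₂ ∧ d₁ + d₂ + d₃ = T ∧ max p₁ e₁ ≤ d₁ ∧
      d₂ ∈ Set.Icc (max p₂ e₂) (min p₁ e₁) ∧ d₃ ∈ Set.Icc (max p₃ e₃) (min p₂ e₂) ∧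
      √((d₁ - p₁) * (d₁ - p₂) * (d₁ - p₃) * ((d₁ - e₁) * (d₁ - e₂) * (d₁ - e₃))) * (d₂ - d₃) =
      √((d₂ - p₁) * (d₂ - p₂) * (d₂ - p₃) * ((d₂ - e₁) * (d₂ - e₂) * (d₂ - e₃))) * (d₁ - d₃) +
      √((d₃ - p₁) * (d₃ - p₂) * (d₃ - p₃) * ((d₃ - e₁) * (d₃ - e₂) * (d₃ - e₃))) * (d₁ - d₂) := by
  have h12 : min p₁ e₁ < max p₁ e₁ := min_lt_max.mpr h1
  have h23 : min p₂ e₂ < max p₂ e₂ := min_lt_max.mpr h2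
  let w : ℝ → ℝ := fun x =>
    √((x - p₁) * (x - p₂) * (x - p₃) * ((x - e₁) * (x - e₂) * (x - e₃)))
  have hw : Continuous w := by fun_prop
  have hw0 : ∀ x, 0 ≤ w x := fun x => Real.sqrt_nonneg _
  have hw1 : w (max p₁ e₁) = 0 := by rcases max_choice p₁ e₁ with h | h <;> simp [w, h]
  have hw2 : w (max p₂ e₂) = 0 := by rcases max_choice p₂ e₂ with h | h <;> simp [w, h]
  have hw3 : w (max p₃ e₃) = 0 := by rcases max_choice p₃ e₃ with h | h <;> simp [w, h]
  have h3' : max p₃ e₃ ≤ min p₂ e₂ := by simp [*]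
  obtain ⟨x, y, hx, hy, hxy, h0⟩ := exists_eq_zero_of_polygon (a₁ := max p₁ e₁) (a₂ := max p₂ e₂)
    (a₃ := max p₃ e₃) (b₂ := min p₁ e₁) (b₃ := min p₂ e₂) (T := T)
    (f := fun x y => w (T - x - y) * (x - y) - w x * (T - x - y - y) - w y * (T - x - y - x))
    (by fun_prop) (by simp [*]) h3' h7 (by linarith [max_add_min p₁ e₁])
    (by simp only [hw2, hw3, zero_mul, sub_zero]; exact mul_nonneg (hw0 _) (by linarith))
    (fun x y hx hy hxy => by
      obtain rfl : T = x + y + max p₁ e₁ := by linarith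
      rw [show x + y + max p₁ e₁ - x - y = max p₁ e₁ by ring, hw1]
      have := mul_nonneg (hw0 x) (show 0 ≤ max p₁ e₁ - y by linarith [hx.1, hx.2, hy.2])
      have := mul_nonneg (hw0 y) (show 0 ≤ max p₁ e₁ - x by linarith [hx.2])
      linarith)
  exact ⟨T - x - y, x, y, by linarith [hx.2], by linarith [hx.1, hy.2], by ring, hxy, hx, hy,
    by linarith⟩

lemma exists_orthogonal_updates {p₁ p₂ p₃ e₁ e₂ e₃ T : ℝ} (hp : p₂ ≤ p₁) (hp' : p₃ ≤ p₂)
    (he : e₂ ≤ e₁) (he' : e₃ ≤ e₂) (h1 : p₁ ≠ e₁) (h2 : p₂ ≠ e₂) (h3 : p₂ ≤ e₁) (h4 : e₂ ≤ p₁)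
    (h5 : p₃ ≤ e₂) (h6 : e₃ ≤ p₂) (h7 : max p₁ e₁ + max p₂ e₂ + max p₃ e₃ ≤ T)
    (h8 : T ≤ p₁ + e₁ + min p₂ e₂) :
    ∃ d₁ d₂ d₃ u₁ u₂ u₃ v₁ v₂ v₃ : ℝ, d₂ < d₁ ∧ d₃ < d₂ ∧ d₁ + d₂ + d₃ = T ∧
      u₁ ^ 2 * ((d₁ - d₂) * (d₁ - d₃)) = (d₁ - p₁) * (d₁ - p₂) * (d₁ - p₃) ∧
      u₂ ^ 2 * ((d₂ - d₁) * (d₂ - d₃)) = (d₂ - p₁) * (d₂ - p₂) * (d₂ - p₃) ∧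
      u₃ ^ 2 * ((d₃ - d₁) * (d₃ - d₂)) = (d₃ - p₁) * (d₃ - p₂) * (d₃ - p₃) ∧
      v₁ ^ 2 * ((d₁ - d₂) * (d₁ - d₃)) = (d₁ - e₁) * (d₁ - e₂) * (d₁ - e₃) ∧
      v₂ ^ 2 * ((d₂ - d₁) * (d₂ - d₃)) = (d₂ - e₁) * (d₂ - e₂) * (d₂ - e₃) ∧
      v₃ ^ 2 * ((d₃ - d₁) * (d₃ - d₂)) = (d₃ - e₁) * (d₃ - e₂) * (d₃ - e₃) ∧
      u₁ * v₁ + u₂ * v₂ + u₃ * v₃ = 0 := by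
  obtain ⟨d₁, d₂, d₃, h12, h23, hd, hd1, ⟨hd2, hd2'⟩, ⟨hd3, hd3'⟩, h0⟩ :=
    exists_interlacing hp hp' he he' h1 h2 h3 h4 h5 h6 h7 h8
  obtain ⟨hp1, he1⟩ := max_le_iff.mp hd1
  obtain ⟨hp2, he2⟩ := max_le_iff.mp hd2
  obtain ⟨hp2', he2'⟩ := le_min_iff.mp hd2'
  obtain ⟨hp3, he3⟩ := max_le_iff.mp hd3
  obtain ⟨hp3', he3'⟩ := le_min_iff.mp hd3'
  have key : ∀ {a b c : ℝ}, 0 ≤ a → 0 ≤ b → 0 < c →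
      ∃ x y : ℝ, x ^ 2 * c = a ∧ y ^ 2 * c = b ∧ x * y = √(a * b) / c := fun {a b c} ha hb hc =>
    ⟨√(a / c), √(b / c), by rw [Real.sq_sqrt (by positivity), div_mul_cancel₀ _ hc.ne'],
      by rw [Real.sq_sqrt (by positivity), div_mul_cancel₀ _ hc.ne'], by
        rw [← Real.sqrt_mul (by positivity), div_mul_div_comm, Real.sqrt_div (by positivity),
          Real.sqrt_mul_self hc.le]⟩
  have s1 : 0 < (d₁ - d₂) * (d₁ - d₃) := mul_pos (by linarith) (by linarith)
  have s2 : 0 < (d₁ - d₂) * (d₂ - d₃) := mul_pos (by linarith) (by linarith)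
  have s3 : 0 < (d₁ - d₃) * (d₂ - d₃) := mul_pos (by linarith) (by linarith)
  have sign1 : ∀ {x y z : ℝ}, x ≤ d₁ → y ≤ d₁ → z ≤ d₁ → 0 ≤ (d₁ - x) * (d₁ - y) * (d₁ - z) :=
    fun hx hy hz => mul_nonneg (mul_nonneg (by linarith) (by linarith)) (by linarith)
  have sign2 : ∀ {x y z : ℝ}, d₂ ≤ x → y ≤ d₂ → z ≤ d₂ → 0 ≤ (x - d₂) * (d₂ - y) * (d₂ - z) :=
    fun hx hy hz => mul_nonneg (mul_nonneg (by linarith) (by linarith)) (by linarith)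
  have sign3 : ∀ {x y z : ℝ}, d₃ ≤ x → d₃ ≤ y → z ≤ d₃ → 0 ≤ (x - d₃) * (y - d₃) * (d₃ - z) :=
    fun hx hy hz => mul_nonneg (mul_nonneg (by linarith) (by linarith)) (by linarith)
  obtain ⟨u₁, v₁, hu1, hv1, hw1⟩ := key (sign1 hp1 (by linarith : p₂ ≤ d₁) (by linarith : p₃ ≤ d₁))
    (sign1 he1 (by linarith : e₂ ≤ d₁) (by linarith : e₃ ≤ d₁)) s1
  obtain ⟨u₂, v₂, hu2, hv2, hw2⟩ := key (sign2 hp2' hp2 (by linarith : p₃ ≤ d₂))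
    (sign2 he2' he2 (by linarith : e₃ ≤ d₂)) s2
  obtain ⟨u₃, v₃, hu3, hv3, hw3⟩ := key (sign3 (by linarith : d₃ ≤ p₁) hp3' hp3)
    (sign3 (by linarith : d₃ ≤ e₁) he3' he3) s3
  refine ⟨d₁, d₂, d₃, u₁, u₂, u₃, v₁, -v₂, -v₃, h12, h23, hd, hu1, by linear_combination -hu2,
    by linear_combination hu3, hv1, by linear_combination -hv2, by linear_combination hv3, ?_⟩
  rw [mul_neg, mul_neg, hw1, hw2, hw3]
  have e2 : (p₁ - d₂) * (d₂ - p₂) * (d₂ - p₃) * ((e₁ - d₂) * (d₂ - e₂) * (d₂ - e₃)) =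
      (d₂ - p₁) * (d₂ - p₂) * (d₂ - p₃) * ((d₂ - e₁) * (d₂ - e₂) * (d₂ - e₃)) := by ring
  have e3 : (p₁ - d₃) * (p₂ - d₃) * (d₃ - p₃) * ((e₁ - d₃) * (e₂ - d₃) * (d₃ - e₃)) =
      (d₃ - p₁) * (d₃ - p₂) * (d₃ - p₃) * ((d₃ - e₁) * (d₃ - e₂) * (d₃ - e₃)) := by ring
  rw [e2, e3]
  have n12 : d₁ - d₂ ≠ 0 := by linarith
  have n13 : d₁ - d₃ ≠ 0 := by linarith
  have n23 : d₂ - d₃ ≠ 0 := by linarith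
  have clear : ∀ {a b c : ℝ}, a * (d₂ - d₃) = b * (d₁ - d₃) + c * (d₁ - d₂) →
      a / ((d₁ - d₂) * (d₁ - d₃)) + -(b / ((d₁ - d₂) * (d₂ - d₃))) +
        -(c / ((d₁ - d₃) * (d₂ - d₃))) = 0 := fun h => by
    field_simp
    linear_combination h
  exact clear h0

section HornThree

open Polynomial

lemma charpoly_diagonal_sub_vecMulVec {d u p : Fin 3 → ℝ} (h01 : d 0 ≠ d 1) (h02 : d 0 ≠ d 2)
    (h12 : d 1 ≠ d 2)
    (h0 : u 0 ^ 2 * ((d 0 - d 1) * (d 0 - d 2)) = (d 0 - p 0) * (d 0 - p 1) * (d 0 - p 2))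
    (h1 : u 1 ^ 2 * ((d 1 - d 0) * (d 1 - d 2)) = (d 1 - p 0) * (d 1 - p 1) * (d 1 - p 2))
    (h2 : u 2 ^ 2 * ((d 2 - d 0) * (d 2 - d 1)) = (d 2 - p 0) * (d 2 - p 1) * (d 2 - p 2)) :
    (diagonal (fun i => (d i : ℂ)) - vecMulVec (fun i => (u i : ℂ)) fun i => (u i : ℂ)).charpoly =
      ∏ i, (X - C (p i : ℂ)) := by
  refine Polynomial.funext fun r => ?_
  have hD : ((d 0 : ℂ) - d 1) * (d 0 - d 2) * (d 1 - d 2) ≠ 0 := mod_cast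
    mul_ne_zero (mul_ne_zero (sub_ne_zero.mpr h01) (sub_ne_zero.mpr h02)) (sub_ne_zero.mpr h12)
  replace h0 := congrArg ((↑) : ℝ → ℂ) h0
  replace h1 := congrArg ((↑) : ℝ → ℂ) h1
  replace h2 := congrArg ((↑) : ℝ → ℂ) h2
  push_cast at h0 h1 h2
  simp [eval_charpoly, det_fin_three, scalar_apply, vecMulVec_apply, Fin.prod_univ_three]
  refine mul_left_cancel₀ hD ?_
  linear_combination h0 * ((d 1 - d 2) * (r - d 1) * (r - d 2)) -
    h1 * ((d 0 - d 2) * (r - d 0) * (r - d 2)) + h2 * ((d 0 - d 1) * (r - d 0) * (r - d 1))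

lemma sum_sq_of_interpolation {d₀ d₁ d₂ u₀ u₁ u₂ p₀ p₁ p₂ : ℝ} (h01 : d₀ ≠ d₁) (h02 : d₀ ≠ d₂)
    (h12 : d₁ ≠ d₂) (h0 : u₀ ^ 2 * ((d₀ - d₁) * (d₀ - d₂)) = (d₀ - p₀) * (d₀ - p₁) * (d₀ - p₂))
    (h1 : u₁ ^ 2 * ((d₁ - d₀) * (d₁ - d₂)) = (d₁ - p₀) * (d₁ - p₁) * (d₁ - p₂))
    (h2 : u₂ ^ 2 * ((d₂ - d₀) * (d₂ - d₁)) = (d₂ - p₀) * (d₂ - p₁) * (d₂ - p₂)) :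
    u₀ ^ 2 + u₁ ^ 2 + u₂ ^ 2 = d₀ + d₁ + d₂ - (p₀ + p₁ + p₂) := by
  have hD : (d₀ - d₁) * (d₀ - d₂) * (d₁ - d₂) ≠ 0 :=
    mul_ne_zero (mul_ne_zero (sub_ne_zero.mpr h01) (sub_ne_zero.mpr h02)) (sub_ne_zero.mpr h12)
  refine mul_left_cancel₀ hD ?_
  linear_combination h0 * (d₁ - d₂) - h1 * (d₀ - d₂) + h2 * (d₀ - d₁)

lemma charpoly_vecMulVec_sub_vecMulVec {u v q : Fin 3 → ℝ}
    (hu : u 0 ^ 2 + u 1 ^ 2 + u 2 ^ 2 = q 1 - q 2) (hv : v 0 ^ 2 + v 1 ^ 2 + v 2 ^ 2 = q 0 - q 1)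
    (huv : u 0 * v 0 + u 1 * v 1 + u 2 * v 2 = 0) :
    (diagonal (fun _ => (q 1 : ℂ)) - vecMulVec (fun i => (u i : ℂ)) (fun i => (u i : ℂ)) +
      vecMulVec (fun i => (v i : ℂ)) fun i => (v i : ℂ)).charpoly = ∏ i, (X - C (q i : ℂ)) := by
  refine Polynomial.funext fun r => ?_
  replace hu := congrArg ((↑) : ℝ → ℂ) hu
  replace hv := congrArg ((↑) : ℝ → ℂ) hv
  replace huv := congrArg ((↑) : ℝ → ℂ) huv
  push_cast at hu hv huv
  simp [eval_charpoly, det_fin_three, scalar_apply, vecMulVec_apply, Fin.prod_univ_three]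
  linear_combination ((r - q 1) ^ 2 - (r - q 1) * (v 0 ^ 2 + v 1 ^ 2 + v 2 ^ 2)) * hu -
    ((r - q 1) ^ 2 + (r - q 1) * (q 1 - q 2)) * hv +
    (r - q 1) * (u 0 * v 0 + u 1 * v 1 + u 2 * v 2) * huv

/-- `p`, `q` and `c` are spectra of Hermitian matrices `P`, `Q` and `P - Q`, where `P - Q` is
diagonal. -/
def IsSpectralDifference {n : ℕ} (p q c : Fin n → ℝ) : Prop :=
  ∃ U ∈ unitaryGroup (Fin n) ℂ, (U * diagonal (fun i => (p i : ℂ)) * Uᴴ -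
    diagonal fun i => (c i : ℂ)).charpoly = ∏ i, (X - C (q i : ℂ))

lemma isSpectralDifference_of_charpoly {n : ℕ} {P Q : Matrix (Fin n) (Fin n) ℂ}
    {p q c : Fin n → ℝ} (hP : P.IsHermitian) (hQ : Q.IsHermitian) (hp : Antitone p)
    (hc : Antitone c) (hPp : P.charpoly = ∏ i, (X - C (p i : ℂ)))
    (hQq : Q.charpoly = ∏ i, (X - C (q i : ℂ)))
    (hPQ : (P - Q).charpoly = ∏ i, (X - C (c i : ℂ))) : IsSpectralDifference p q c := by
  obtain ⟨V, hV, hV', hPV⟩ := exists_unitary_eigVec P hP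
  obtain ⟨W, hW, hW', hPQW⟩ := exists_unitary_eigVec (P - Q) (hP.sub hQ)
  rw [eigVec_eq_of_charpoly hP hp hPp] at hPV
  rw [eigVec_eq_of_charpoly (hP.sub hQ) hc hPQ] at hPQW
  refine ⟨Wᴴ * V, ?_, ?_⟩
  · rw [mem_unitaryGroup_iff, star_eq_conjTranspose, conjTranspose_mul, conjTranspose_conjTranspose,
      Matrix.mul_assoc, ← Matrix.mul_assoc V, hV', Matrix.one_mul, hW]
  · have hd : diagonal (fun i => (c i : ℂ)) = Wᴴ * (P - Q) * W := by
      rw [hPQW, Matrix.mul_assoc, Matrix.mul_assoc, hW, Matrix.mul_one, ← Matrix.mul_assoc, hW,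
        Matrix.one_mul]
    have hQW : Wᴴ * V * diagonal (fun i => (p i : ℂ)) * (Wᴴ * V)ᴴ - diagonal (fun i => (c i : ℂ)) =
        Wᴴ * Q * W := by
      rw [hd, Matrix.mul_sub, Matrix.sub_mul, conjTranspose_mul, conjTranspose_conjTranspose]
      nth_rw 1 [hPV]
      simp only [Matrix.mul_assoc, sub_sub_cancel]
    rw [hQW, charpoly_mul_comm, ← Matrix.mul_assoc, hW', Matrix.one_mul, hQq]

lemma isSpectralDifference_of_ne {p q c : Fin 3 → ℝ} (hp : Antitone p) (hq : Antitone q)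
    (hc : Antitone c) (h : HornIneqs (Fin.append p q) c)
    (ht : ∑ i, c i = ∑ i, p i - ∑ i, q i)
    (h0 : p 0 ≠ c 0 + q 1) (h1 : p 1 ≠ c 1 + q 1) : IsSpectralDifference p q c := by
  obtain ⟨i1, i2, i3, i4, i5, i6, i7, i8, i9, i10, i11, i12, -⟩ := h
  simp only [Fin.sum_univ_three] at ht
  have hp1 : p 1 ≤ p 0 := hp (by decide)
  have hp2 : p 2 ≤ p 1 := hp (by decide)
  have hq1 : q 1 ≤ q 0 := hq (by decide)
  have hq2 : q 2 ≤ q 1 := hq (by decide)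
  have hc1 : c 1 ≤ c 0 := hc (by decide)
  have hc2 : c 2 ≤ c 1 := hc (by decide)
  have a0 : Fin.append p q 0 = p 0 := rfl
  have a1 : Fin.append p q 1 = p 1 := rfl
  have a2 : Fin.append p q 2 = p 2 := rfl
  have a3 : Fin.append p q 3 = q 0 := rfl
  have a4 : Fin.append p q 4 = q 1 := rfl
  have a5 : Fin.append p q 5 = q 2 := rfl
  simp only [a0, a1, a2, a3, a4, a5] at i1 i2 i3 i4 i5 i6 i7 i8 i9 i10 i11 i12
  obtain ⟨d₀, d₁, d₂, u₀, u₁, u₂, v₀, v₁, v₂, hd1, hd2, hd, e0, e1, e2, f0, f1, f2, huv⟩ :=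
    exists_orthogonal_updates (p₁ := p 0) (p₂ := p 1) (p₃ := p 2) (e₁ := c 0 + q 1)
      (e₂ := c 1 + q 1) (e₃ := c 2 + q 1) (T := p 0 + p 1 + p 2 + (q 1 - q 2))
      hp1 hp2 (by linarith) (by linarith) h0 h1 (by linarith) (by linarith) (by linarith)
      (by linarith)
      (by
        rcases max_choice (p 0) (c 0 + q 1) with h | h <;>
        rcases max_choice (p 1) (c 1 + q 1) with h' | h' <;>
        rcases max_choice (p 2) (c 2 + q 1) with h'' | h'' <;> rw [h, h', h''] <;> linarith)
      (by rcases min_choice (p 1) (c 1 + q 1) with h | h <;> rw [h] <;> linarith)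
  have n01 : d₀ ≠ d₁ := hd1.ne'
  have n02 : d₀ ≠ d₂ := (hd2.trans hd1).ne'
  have n12 : d₁ ≠ d₂ := hd2.ne'
  have hu := sum_sq_of_interpolation n01 n02 n12 e0 e1 e2
  have hv := sum_sq_of_interpolation n01 n02 n12 f0 f1 f2
  have hu' : u₀ ^ 2 + u₁ ^ 2 + u₂ ^ 2 = q 1 - q 2 := by linarith
  have hv' : v₀ ^ 2 + v₁ ^ 2 + v₂ ^ 2 = q 0 - q 1 := by linarith
  set d : Fin 3 → ℝ := ![d₀, d₁, d₂]
  set u : Fin 3 → ℝ := ![u₀, u₁, u₂]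
  set v : Fin 3 → ℝ := ![v₀, v₁, v₂]
  have herm : ∀ w : Fin 3 → ℝ,
      (vecMulVec (fun i => (w i : ℂ)) fun i => (w i : ℂ)).IsHermitian := fun w => by
    ext i j
    simp [vecMulVec_apply, mul_comm]
  have hermD : ∀ w : Fin 3 → ℝ, (diagonal fun i => (w i : ℂ)).IsHermitian := fun w =>
    isHermitian_diagonal_iff.mpr fun i => Complex.conj_ofReal _
  refine isSpectralDifference_of_charpoly ((hermD d).sub (herm u))
    (((hermD fun _ => q 1).sub (herm u)).add (herm v)) hp hc
    (charpoly_diagonal_sub_vecMulVec n01 n02 n12 e0 e1 e2)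
    (charpoly_vecMulVec_sub_vecMulVec hu' hv' huv) ?_
  have := charpoly_diagonal_sub_vecMulVec (d := fun i => d i - q 1) (u := v) (p := c)
    (sub_left_injective.ne n01) (sub_left_injective.ne n02) (sub_left_injective.ne n12)
    (by simp only [d, v, cons_val]; linear_combination f0)
    (by simp only [d, v, cons_val]; linear_combination f1)
    (by simp only [d, v, cons_val]; linear_combination f2)
  rw [← this]
  congr 1
  ext i j
  by_cases hij : i = j <;> simp [hij]
  ring

end HornThree

section HornThree

open Polynomial Filter Topology

lemma isCompact_unitaryGroup {n : Type*} [Fintype n] [DecidableEq n] :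
    IsCompact (unitaryGroup n ℂ : Set (Matrix n n ℂ)) := by
  have hb : IsCompact (Set.univ.pi fun _ : n => Set.univ.pi fun _ : n =>
      Metric.closedBall (0 : ℂ) 1) :=
    isCompact_univ_pi fun _ => isCompact_univ_pi fun _ => isCompact_closedBall 0 1
  refine hb.of_isClosed_subset ?_ fun U hU i _ j _ => ?_
  · have : (unitaryGroup n ℂ : Set (Matrix n n ℂ)) = {U | U * Uᴴ = 1} :=
      Set.ext fun U => mem_unitaryGroup_iff
    rw [this]
    exact isClosed_eq (by fun_prop) continuous_const
  · simpa using entry_norm_bound_of_unitary hU i j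

lemma isClosed_setOf_isSpectralDifference {n : ℕ} :
    IsClosed {x : (Fin n → ℝ) × (Fin n → ℝ) × (Fin n → ℝ) |
      IsSpectralDifference x.1 x.2.1 x.2.2} := by
  have : CompactSpace (unitaryGroup (Fin n) ℂ) :=
    isCompact_iff_compactSpace.mp isCompact_unitaryGroup
  let S : Set (unitaryGroup (Fin n) ℂ × (Fin n → ℝ) × (Fin n → ℝ) × (Fin n → ℝ)) :=
    ⋂ r : ℂ, {x | (scalar (Fin n) r - (x.1.1 * diagonal (fun i => (x.2.1 i : ℂ)) * x.1.1ᴴ -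
      diagonal fun i => (x.2.2.2 i : ℂ))).det = ∏ i, (r - (x.2.2.1 i : ℂ))}
  have hS : IsClosed S := isClosed_iInter fun r => isClosed_eq (by fun_prop) (by fun_prop)
  convert isClosedMap_snd_of_compactSpace _ hS
  ext x
  simp only [IsSpectralDifference, S, Set.mem_ofPred_eq, Set.mem_image, Set.mem_iInter, Prod.exists,
    Subtype.exists, exists_prop]
  constructor
  · rintro ⟨U, hU, h⟩
    refine ⟨U, hU, x.1, x.2.1, x.2.2, fun r => ?_, rfl⟩
    rw [← eval_charpoly, h, eval_prod]
    simp
  · rintro ⟨U, hU, p, q, c, h, rfl⟩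
    refine ⟨U, hU, Polynomial.funext fun r => ?_⟩
    rw [eval_charpoly, h, eval_prod]
    simp

lemma eventually_add_mul_ne_zero {a b : ℝ} (hb : b ≠ 0) : ∀ᶠ ε in 𝓝[>] (0 : ℝ), a + ε * b ≠ 0 := by
  refine Eventually.filter_mono (nhdsGT_le_nhdsNE 0) ?_
  rcases eq_or_ne a 0 with rfl | ha
  · filter_upwards [self_mem_nhdsWithin] with ε hε
    simpa [hb] using hε
  · refine eventually_nhdsWithin_of_eventually_nhds (ContinuousAt.eventually_ne (by fun_prop) ?_)
    simpa

lemma HornIneqs.add_smul {l l' : Fin 6 → ℝ} {t t' : Fin 3 → ℝ} {ε : ℝ} (h : HornIneqs l t)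
    (h' : HornIneqs l' t') (hε : 0 ≤ ε) : HornIneqs (l + ε • l') (t + ε • t') := by
  obtain ⟨i1, i2, i3, i4, i5, i6, i7, i8, i9, i10, i11, i12, i13⟩ := h
  obtain ⟨j1, j2, j3, j4, j5, j6, j7, j8, j9, j10, j11, j12, j13⟩ := h'
  have key : ∀ {a b a' b' : ℝ}, a ≤ b → a' ≤ b' → a + ε * a' ≤ b + ε * b' := fun h h' =>
    add_le_add h (mul_le_mul_of_nonneg_left h' hε)
  refine ⟨?_, ?_, ?_, ?_, ?_, ?_, ?_, ?_, ?_, ?_, ?_, ?_, ?_⟩ <;>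
    simp only [Pi.add_apply, Pi.smul_apply, smul_eq_mul]
  · linarith only [key i1 j1]
  · linarith only [key i2 j2]
  · linarith only [key i3 j3]
  · linarith only [key i4 j4]
  · linarith only [key i5 j5]
  · linarith only [key i6 j6]
  · linarith only [key i7 j7]
  · linarith only [key i8 j8]
  · linarith only [key i9 j9]
  · linarith only [key i10 j10]
  · linarith only [key i11 j11]
  · linarith only [key i12 j12]
  · linarith only [key i13 j13]

theorem isSpectralDifference_of_hornIneqs {p q c : Fin 3 → ℝ} (hp : Antitone p) (hq : Antitone q)
    (hc : Antitone c) (h : HornIneqs (Fin.append p q) c) (ht : ∑ i, c i = ∑ i, p i - ∑ i, q i) :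
    IsSpectralDifference p q c := by
  have anti : ∀ {a : Fin 3 → ℝ} {x y z ε : ℝ}, Antitone a → 0 < ε → y ≤ x → z ≤ y →
      Antitone (a + ε • ![x, y, z]) := fun {a x y z ε} ha hε h1 h2 => by
    refine ha.add fun i j hij => mul_le_mul_of_nonneg_left ?_ hε.le
    exact Fin.antitone_iff_succ_le.mpr (by simp [Fin.forall_fin_succ, h1, h2]) hij
  have hlim : Tendsto (fun ε : ℝ => (p + ε • ![2, 1, 0], q + ε • ![2, 1, 0], c + ε • ![2, -1, -1]))
      (𝓝[>] 0) (𝓝 (p, q, c)) := by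
    refine Tendsto.mono_left (Continuous.tendsto' (by fun_prop) _ _ (by simp)) nhdsWithin_le_nhds
  have hev : ∀ᶠ ε : ℝ in 𝓝[>] 0, IsSpectralDifference (p + ε • ![2, 1, 0]) (q + ε • ![2, 1, 0])
      (c + ε • ![2, -1, -1]) := by
    filter_upwards [self_mem_nhdsWithin,
      eventually_add_mul_ne_zero (a := p 0 - c 0 - q 1) (b := -1) (by norm_num),
      eventually_add_mul_ne_zero (a := p 1 - c 1 - q 1) (b := 1) (by norm_num)] with ε hε h0 h1
    have hε : 0 < ε := hε
    refine isSpectralDifference_of_ne (anti hp hε (by norm_num) (by norm_num))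
      (anti hq hε (by norm_num) (by norm_num)) (anti hc hε (by norm_num) (by norm_num)) ?_ ?_ ?_ ?_
    · have := h.add_smul (l' := ![2, 1, 0, 2, 1, 0]) (t' := ![2, -1, -1])
        (by simp only [HornIneqs, cons_val]; norm_num) hε.le
      convert this using 1
      ext i
      fin_cases i <;> rfl
    · simp [Fin.sum_univ_three] at ht ⊢
      linarith
    · intro h
      simp at h
      exact h0 (by linarith)
    · intro h
      simp at h
      exact h1 (by linarith)
  have := isClosed_setOf_isSpectralDifference.mem_of_tendsto hlim hev
  exact this

end HornThree

section Sufficiency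

open Polynomial

lemma isBlockSpectrum_of_trace_eq {l : Fin 6 → ℝ} {s : Fin 3 → ℝ} {τ : ℝ} (hl : Antitone l)
    (hs : Antitone s) (hτ : 1 ≤ τ) (h : HornIneqs l fun k => 2 * τ * s k)
    (ht : 2 * τ * (s 0 + s 1 + s 2) = l 0 + l 1 + l 2 - l 3 - l 4 - l 5) :
    IsBlockSpectrum s (∏ i, (X - C (l i : ℂ))) := by
  have happ : Fin.append (fun i : Fin 3 => l (i.castAdd 3)) (fun i : Fin 3 => l (i.natAdd 3)) = l :=
    Fin.append_castAdd_natAdd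
  obtain ⟨U, hU, hq⟩ := isSpectralDifference_of_hornIneqs (p := fun i => l (i.castAdd 3))
    (q := fun i => l (i.natAdd 3)) (c := fun k => 2 * τ * s k)
    (hl.comp_monotone (Fin.strictMono_castAdd 3).monotone)
    (hl.comp_monotone (Fin.strictMono_natAdd 3).monotone)
    (fun i j hij => mul_le_mul_of_nonneg_left (hs hij) (by linarith)) (by rwa [happ]) (by
      simp only [Fin.sum_univ_three]
      change _ = l 0 + l 1 + l 2 - (l 3 + l 4 + l 5)
      linarith)
  set P := U * diagonal (fun i => (l (i.castAdd 3) : ℂ)) * Uᴴ with hPdef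
  set D := diagonal fun k => ((2 * τ * s k : ℝ) : ℂ)
  have hD : ∀ {n : ℕ} (w : Fin n → ℝ), (diagonal fun i => (w i : ℂ)).IsHermitian := fun w =>
    isHermitian_diagonal_iff.mpr fun i => Complex.conj_ofReal _
  have hP : P.IsHermitian := isHermitian_mul_mul_conjTranspose U (hD _)
  have hp : P.charpoly = ∏ i : Fin 3, (X - C (l (i.castAdd 3) : ℂ)) := by
    rw [hPdef, charpoly_mul_comm, ← Matrix.mul_assoc, ← star_eq_conjTranspose,
      mem_unitaryGroup_iff'.mp hU, Matrix.one_mul, charpoly_diagonal]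
  have hs' : (fun k => 1 / (2 * τ) * (2 * τ * s k)) = s := by
    ext k
    field_simp
  have hprod : ∏ i, (X - C (l i : ℂ)) = P.charpoly * (P - D).charpoly := by
    rw [hp, hq]
    exact Fin.prod_univ_add (a := 3) (b := 3) fun i : Fin (3 + 3) => X - C (l i : ℂ)
  rw [hprod, ← hs']
  refine isBlockSpectrum_of_sub_eq hP (hP.sub (hD _)) (sub_sub_cancel P D) (by positivity) ?_
  rw [div_le_div_iff₀ (by positivity) (by positivity)]
  linarith

set_option maxHeartbeats 2000000 in
theorem isBlockSpectrum_of_hornIneqs {l : Fin 6 → ℝ} {s : Fin 3 → ℝ} (hl : Antitone l)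
    (hs : Antitone s) (hs0 : 0 ≤ s 2) (h : HornIneqs l fun k => 2 * s k) :
    IsBlockSpectrum s (∏ i, (X - C (l i : ℂ))) := by
  have hl1 : l 1 ≤ l 0 := hl (by decide)
  have hl2 : l 2 ≤ l 1 := hl (by decide)
  have hl3 : l 3 ≤ l 2 := hl (by decide)
  have hl4 : l 4 ≤ l 3 := hl (by decide)
  have hl5 : l 5 ≤ l 4 := hl (by decide)
  have hs1 : s 1 ≤ s 0 := hs (by decide)
  have hs2 : s 2 ≤ s 1 := hs (by decide)
  set p := ∏ i, (X - C (l i : ℂ)) with hp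
  rw [Fin.prod_univ_six] at hp
  have split0 : ∀ a b c d x y : ℝ, (X - C (a : ℂ)) * (X - C (b : ℂ)) * (X - C (c : ℂ)) *
      (X - C (d : ℂ)) * ((X - C (x : ℂ)) * (X - C (y : ℂ))) = p → 2 * s 1 ≤ a - d →
      2 * s 2 ≤ a - c → 2 * s 2 ≤ b - d → 2 * (s 1 + s 2) ≤ a + b - c - d → 2 * s 0 ≤ x - y →
      IsBlockSpectrum s p := fun a b c d x y hp h1 h2 h3 h4 h5 => hp ▸
    .insertNth 0 (isBlockSpectrum_two hs2 hs0 h1 h2 h3 h4) (isBlockSpectrum_pair (by linarith) h5)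
  have split1 : ∀ a b c d x y : ℝ, (X - C (a : ℂ)) * (X - C (b : ℂ)) * (X - C (c : ℂ)) *
      (X - C (d : ℂ)) * ((X - C (x : ℂ)) * (X - C (y : ℂ))) = p → 2 * s 0 ≤ a - d →
      2 * s 2 ≤ a - c → 2 * s 2 ≤ b - d → 2 * (s 0 + s 2) ≤ a + b - c - d → 2 * s 1 ≤ x - y →
      IsBlockSpectrum s p := fun a b c d x y hp h1 h2 h3 h4 h5 => hp ▸
    .insertNth 1 (isBlockSpectrum_two (hs2.trans hs1) hs0 h1 h2 h3 h4)
      (isBlockSpectrum_pair (hs0.trans hs2) h5)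
  have split2 : ∀ a b c d x y : ℝ, (X - C (a : ℂ)) * (X - C (b : ℂ)) * (X - C (c : ℂ)) *
      (X - C (d : ℂ)) * ((X - C (x : ℂ)) * (X - C (y : ℂ))) = p → 2 * s 0 ≤ a - d →
      2 * s 1 ≤ a - c → 2 * s 1 ≤ b - d → 2 * (s 0 + s 1) ≤ a + b - c - d → 2 * s 2 ≤ x - y →
      IsBlockSpectrum s p := fun a b c d x y hp h1 h2 h3 h4 h5 => hp ▸
    .insertNth 2 (isBlockSpectrum_two hs1 (hs0.trans hs2) h1 h2 h3 h4) (isBlockSpectrum_pair hs0 h5)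
  obtain ⟨i1, i2, i3, i4, i5, i6, i7, i8, i9, i10, i11, i12, i13⟩ := h
  rcases (show 0 ≤ s 0 by linarith).eq_or_lt with h0 | h0
  · refine split2 (l 0) (l 1) (l 3) (l 4) (l 2) (l 5) (by rw [hp]; ring) ?_ ?_ ?_ ?_ ?_ <;> linarith
  obtain ⟨τ, hτ, hle, i, hi⟩ := exists_tight_scale
    (a := ![s 0, s 1, s 1, s 2, s 2, s 2, s 0 + s 1, s 0 + s 2, s 0 + s 2, s 1 + s 2, s 1 + s 2,
      s 1 + s 2, s 0 + s 1 + s 2])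
    (b := (2⁻¹ : ℝ) • ![l 0 - l 5, l 1 - l 5, l 0 - l 4, l 0 - l 3, l 1 - l 4, l 2 - l 5,
      l 0 + l 1 - l 4 - l 5, l 0 + l 1 - l 3 - l 5, l 0 + l 2 - l 4 - l 5, l 0 + l 1 - l 3 - l 4,
      l 0 + l 2 - l 3 - l 5, l 1 + l 2 - l 4 - l 5, l 0 + l 1 + l 2 - l 3 - l 4 - l 5])
    (by intro i; fin_cases i <;> simp <;> linarith) ⟨0, h0⟩
  clear i1 i2 i3 i4 i5 i6 i7 i8 i9 i10 i11 i12 i13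
  simp only [Fin.forall_fin_succ] at hle
  simp at hle
  obtain ⟨i1, i2, i3, i4, i5, i6, i7, i8, i9, i10, i11, i12, i13⟩ := hle
  have t0 := le_mul_of_one_le_left h0.le hτ
  have t1 := le_mul_of_one_le_left (hs0.trans hs2) hτ
  have t2 := le_mul_of_one_le_left hs0 hτ
  fin_cases i <;> simp at hi
  · refine split0 (l 1) (l 2) (l 3) (l 4) (l 0) (l 5) (by rw [hp]; ring) ?_ ?_ ?_ ?_ ?_ <;> linarith
  · refine split1 (l 0) (l 2) (l 3) (l 4) (l 1) (l 5) (by rw [hp]; ring) ?_ ?_ ?_ ?_ ?_ <;> linarith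
  · refine split1 (l 1) (l 2) (l 3) (l 5) (l 0) (l 4) (by rw [hp]; ring) ?_ ?_ ?_ ?_ ?_ <;> linarith
  · refine split2 (l 1) (l 2) (l 4) (l 5) (l 0) (l 3) (by rw [hp]; ring) ?_ ?_ ?_ ?_ ?_ <;> linarith
  · refine split2 (l 0) (l 2) (l 3) (l 5) (l 1) (l 4) (by rw [hp]; ring) ?_ ?_ ?_ ?_ ?_ <;> linarith
  · refine split2 (l 0) (l 1) (l 3) (l 4) (l 2) (l 5) (by rw [hp]; ring) ?_ ?_ ?_ ?_ ?_ <;> linarith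
  · refine split2 (l 0) (l 1) (l 4) (l 5) (l 2) (l 3) (by rw [hp]; ring) ?_ ?_ ?_ ?_ ?_ <;> linarith
  · refine split1 (l 0) (l 1) (l 3) (l 5) (l 2) (l 4) (by rw [hp]; ring) ?_ ?_ ?_ ?_ ?_ <;> linarith
  · refine split1 (l 0) (l 2) (l 4) (l 5) (l 1) (l 3) (by rw [hp]; ring) ?_ ?_ ?_ ?_ ?_ <;> linarith
  · refine split0 (l 0) (l 1) (l 3) (l 4) (l 2) (l 5) (by rw [hp]; ring) ?_ ?_ ?_ ?_ ?_ <;> linarith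
  · refine split0 (l 0) (l 2) (l 3) (l 5) (l 1) (l 4) (by rw [hp]; ring) ?_ ?_ ?_ ?_ ?_ <;> linarith
  · refine split0 (l 1) (l 2) (l 4) (l 5) (l 0) (l 3) (by rw [hp]; ring) ?_ ?_ ?_ ?_ ?_ <;> linarith
  · refine isBlockSpectrum_of_trace_eq hl hs hτ ⟨?_, ?_, ?_, ?_, ?_, ?_, ?_, ?_, ?_, ?_, ?_, ?_, ?_⟩
      (by linarith) <;> linarith

end Sufficiency

theorem stmt_5 (lam : Fin (3 + 3) → ℝ) (s : Fin 3 → ℝ)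
    (h1 : lam 0 ≥ lam 1) (h2 : lam 1 ≥ lam 2) (h3 : lam 2 ≥ lam 3)
    (h4 : lam 3 ≥ lam 4) (h5 : lam 4 ≥ lam 5)
    (hs1 : s 0 ≥ s 1) (hs2 : s 1 ≥ s 2) (hs3 : s 2 ≥ 0) :
    (lam, s) ∈ coneA 3 3 ↔
      (lam 0 - lam 5 ≥ 2 * s 0 ∧
       lam 1 - lam 5 ≥ 2 * s 1 ∧
       lam 0 - lam 4 ≥ 2 * s 1 ∧
       lam 0 - lam 3 ≥ 2 * s 2 ∧
       lam 1 - lam 4 ≥ 2 * s 2 ∧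
       lam 2 - lam 5 ≥ 2 * s 2 ∧
       lam 0 + lam 1 - lam 4 - lam 5 ≥ 2 * (s 0 + s 1) ∧
       lam 0 + lam 1 - lam 3 - lam 5 ≥ 2 * (s 0 + s 2) ∧
       lam 0 + lam 2 - lam 4 - lam 5 ≥ 2 * (s 0 + s 2) ∧
       lam 0 + lam 1 - lam 3 - lam 4 ≥ 2 * (s 1 + s 2) ∧
       lam 0 + lam 2 - lam 3 - lam 5 ≥ 2 * (s 1 + s 2) ∧
       lam 1 + lam 2 - lam 4 - lam 5 ≥ 2 * (s 1 + s 2) ∧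
       lam 0 + lam 1 + lam 2 - lam 3 - lam 4 - lam 5 ≥ 2 * (s 0 + s 1 + s 2)) := by
  have hl : Antitone lam := Fin.antitone_iff_succ_le.mpr (by
    simp only [Fin.forall_fin_succ]
    exact ⟨h1, h2, h3, h4, h5, finZeroElim⟩)
  have hs : Antitone s := Fin.antitone_iff_succ_le.mpr (by
    simp only [Fin.forall_fin_succ]
    exact ⟨hs1, hs2, finZeroElim⟩)
  have hs0 : ∀ i, 0 ≤ s i := fun i => hs3.trans (hs (Fin.le_last i))
  simp only [ge_iff_le, mul_add]
  exact ⟨hornIneqs_of_mem_coneA hs, fun h =>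
    (isBlockSpectrum_of_hornIneqs hl hs hs3 h).mem_coneA hl hs hs0⟩
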